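/- Let Γ be a subgroup of (ℂ*)² of finite rank r (i.e., Γ has a free subgroup Γ₀ of rank r such that every element of Γ has a positive power in Γ₀). Then the number of solutions (x, y) ∈ Γ of the equation x + y = 1 is finite, and is at most 2^{8(r+1)}. -/

import Mathlib

open MeasureTheory Metric in
theorem Finset.card_le_mul_pow_of_ball_multiplicity {α E : Type*} [NormedAddCommGroup E]
    [NormedSpace ℝ E] [FiniteDimensional ℝ E] (Q : Finset α) (f : α → E) {R δ : ℝ}
    (hR : 0 ≤ R) (hδ : 0 < δ) (m : ℕ) (hf : ∀ x ∈ Q, ‖f x‖ ≤ R)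
    (hm : ∀ x ∈ Q, {y ∈ Q | ‖f y - f x‖ < δ}.card ≤ m) :
    (Q.card : ℝ) ≤ m * (1 + 2 * R / δ) ^ Module.finrank ℝ E := by
  classical
  borelize E
  let μ : Measure E := Measure.addHaar
  have key : ∀ z : E, ∑ q ∈ Q, (ball (f q) (δ / 2)).indicator (1 : E → ENNReal) z ≤
      (ball (0 : E) (R + δ / 2)).indicator (fun _ => (m : ENNReal)) z := by
    intro z
    by_cases hz : ∃ q ∈ Q, z ∈ ball (f q) (δ / 2)
    · obtain ⟨q, hq, hzq⟩ := hz
      have hz0 : z ∈ ball (0 : E) (R + δ / 2) := by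
        rw [mem_ball_zero_iff]
        rw [mem_ball, dist_eq_norm] at hzq
        calc ‖z‖ = ‖f q + (z - f q)‖ := by congr 1; abel
          _ ≤ ‖f q‖ + ‖z - f q‖ := norm_add_le _ _
          _ < R + δ / 2 := add_lt_add_of_le_of_lt (hf q hq) hzq
      rw [Set.indicator_of_mem hz0]
      have h1 : ∑ q ∈ Q, (ball (f q) (δ / 2)).indicator (1 : E → ENNReal) z =
          ({y ∈ Q | z ∈ ball (f y) (δ / 2)}.card : ENNReal) := by
        rw [Finset.card_filter]
        push_cast
        refine Finset.sum_congr rfl fun x _ => ?_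
        simp [Set.indicator_apply]
      rw [h1]
      have h2 : {y ∈ Q | z ∈ ball (f y) (δ / 2)} ⊆ {y ∈ Q | ‖f y - f q‖ < δ} := by
        intro y hy
        simp only [Finset.mem_filter, mem_ball, dist_eq_norm] at hy hzq ⊢
        refine ⟨hy.1, ?_⟩
        calc ‖f y - f q‖ = ‖(z - f q) - (z - f y)‖ := by congr 1; abel
          _ ≤ ‖z - f q‖ + ‖z - f y‖ := norm_sub_le _ _
          _ < δ := by linarith [hy.2]
      exact_mod_cast (Finset.card_le_card h2).trans (hm q hq)
    · push Not at hz
      rw [Finset.sum_eq_zero]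
      · exact zero_le
      · intro q hq
        exact Set.indicator_of_notMem (hz q hq) _
  have hvol := lintegral_mono (μ := μ) key
  rw [lintegral_finsetSum _ fun q _ => measurable_one.indicator measurableSet_ball,
    lintegral_indicator_const measurableSet_ball] at hvol
  simp only [lintegral_indicator_one measurableSet_ball] at hvol
  rw [Finset.sum_congr rfl fun q _ => Measure.addHaar_ball_of_pos μ (f q)
      (by positivity : 0 < δ / 2),
    Measure.addHaar_ball_of_pos μ 0 (by positivity : 0 < R + δ / 2), Finset.sum_const, nsmul_eq_mul,
    ← mul_assoc, ← mul_assoc] at hvol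
  have h0 : μ (ball 0 1) ≠ 0 := (measure_ball_pos μ 0 one_pos).ne'
  have htop : μ (ball 0 1) ≠ ⊤ := measure_ball_lt_top.ne
  rw [ENNReal.mul_le_mul_iff_left h0 htop, ← ENNReal.ofReal_natCast, ← ENNReal.ofReal_natCast,
    ← ENNReal.ofReal_mul (by positivity), ← ENNReal.ofReal_mul (by positivity),
    ENNReal.ofReal_le_ofReal_iff (by positivity)] at hvol
  have h3 : R + δ / 2 = (δ / 2) * (1 + 2 * R / δ) := by field_simp; ring
  rw [h3, mul_pow, mul_left_comm, mul_comm] at hvol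
  exact le_of_mul_le_mul_left hvol (by positivity)

theorem Finset.exists_pow_mul_le_of_gap {α : Type*} (B : Finset α) (N : α → ℝ) {A c : ℝ}
    (hc : 0 ≤ c) (hA : ∀ x ∈ B, A ≤ N x)
    (hgap : ∀ x ∈ B, ∀ y ∈ B, x ≠ y → N x ≤ N y → c * N x ≤ N y) (hB : B.Nonempty) :
    ∃ z ∈ B, c ^ (B.card - 1) * A ≤ N z := by
  classical
  induction B using Finset.induction_on_max_value N with
  | empty => exact absurd hB Finset.not_nonempty_empty
  | insert a s ha hmax ih =>
    refine ⟨a, mem_insert_self _ _, ?_⟩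
    rcases s.eq_empty_or_nonempty with rfl | hs
    · simpa using hA a
    obtain ⟨z, hz, hzN⟩ := ih (fun x hx => hA x (mem_insert_of_mem hx))
      (fun x hx y hy => hgap x (mem_insert_of_mem hx) y (mem_insert_of_mem hy)) hs
    rw [card_insert_of_notMem ha]
    obtain ⟨k, hk⟩ : ∃ k, s.card = k + 1 := ⟨s.card - 1, by have := hs.card_pos; omega⟩
    rw [hk] at hzN ⊢
    simp only [Nat.add_sub_cancel] at hzN ⊢
    calc c ^ (k + 1) * A = c * (c ^ k * A) := by ring
      _ ≤ c * N z := by gcongr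
      _ ≤ N a := hgap z (mem_insert_of_mem hz) a (mem_insert_self _ _)
          (fun h => ha (h ▸ hz)) (hmax z hz)

/-- A finite set of vectors satisfying a gap principle and an approximation principle is small
in terms of the dimension of the ambient space. -/
theorem Finset.card_le_of_gap_principles {α E : Type*} [NormedAddCommGroup E]
    [NormedSpace ℝ E] [FiniteDimensional ℝ E] (P : Finset α) (f : α → E)
    (hgap : ∀ x ∈ P, ∀ y ∈ P, x ≠ y → ‖f x‖ ≤ 2 * ‖f y - f x‖ + 3 * Real.log 2)
    (hpade : ∀ x ∈ P, ∀ y ∈ P, ∀ n : ℕ, 0 < n →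
      n * ‖f x‖ ≤ 2 * ‖f y - (2 * n : ℝ) • f x‖ + 3 * n * Real.log 32)
    (hsmall : ∀ x ∈ P, {y ∈ P | ‖f y - f x‖ < 9 / 200}.card ≤ 17) :
    P.card ≤ 2 ^ (8 * (Module.finrank ℝ E + 1)) := by
  classical
  set k := Module.finrank ℝ E
  have hlog : Real.log 2 < 0.6931471808 := Real.log_two_lt_d9
  have hlog32 : Real.log 32 = 5 * Real.log 2 := by
    rw [show (32 : ℝ) = 2 ^ 5 by norm_num, Real.log_pow]; norm_num
  set P₁ := {x ∈ P | ‖f x‖ ≤ 5} with hP₁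
  set P₂ := {x ∈ P | ¬ ‖f x‖ ≤ 5} with hP₂
  have h1 : (P₁.card : ℝ) ≤ (17 : ℕ) * (1 + 2 * 5 / (9 / 200)) ^ k := by
    refine card_le_mul_pow_of_ball_multiplicity P₁ f (by norm_num) (by norm_num) 17
      (fun x hx => (mem_filter.1 hx).2) fun x hx => ?_
    refine le_trans (card_le_card ?_) (hsmall x (mem_filter.1 hx).1)
    exact filter_subset_filter _ (filter_subset _ _)
  have h2 : (P₂.card : ℝ) ≤ (40 : ℕ) * (1 + 2 * 1 / (1 / 100)) ^ k := by
    have hpos : ∀ x ∈ P₂, 5 < ‖f x‖ := fun x hx => not_le.1 (mem_filter.1 hx).2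
    have hP : ∀ x ∈ P₂, x ∈ P := fun x hx => (mem_filter.1 hx).1
    refine card_le_mul_pow_of_ball_multiplicity P₂ (fun x => ‖f x‖⁻¹ • f x) (by norm_num)
      (by norm_num) 40 (fun x hx => ?_) fun x hx => ?_
    · have := hpos x hx
      rw [norm_smul, norm_inv, norm_norm, inv_mul_cancel₀ (by positivity)]
    set B := {y ∈ P₂ | ‖‖f y‖⁻¹ • f y - ‖f x‖⁻¹ • f x‖ < 1 / 100} with hB
    have hBP : ∀ y ∈ B, y ∈ P₂ := fun y hy => (mem_filter.1 hy).1
    have hdist : ∀ y ∈ B, ∀ z ∈ B, ∀ c : ℝ,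
        ‖f z - c • f y‖ ≤ ‖f z‖ / 50 + |‖f z‖ - c * ‖f y‖| := by
      intro y hy z hz c
      have hy0 := hpos y (hBP y hy)
      have hz0 := hpos z (hBP z hz)
      have e1 := (mem_filter.1 hy).2
      have e2 := (mem_filter.1 hz).2
      set uy := ‖f y‖⁻¹ • f y with huy
      set uz := ‖f z‖⁻¹ • f z with huz
      set ux := ‖f x‖⁻¹ • f x
      have hfy : f y = ‖f y‖ • uy := by rw [huy, smul_inv_smul₀ (by positivity)]
      have hfz : f z = ‖f z‖ • uz := by rw [huz, smul_inv_smul₀ (by positivity)]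
      have hny : ‖uy‖ = 1 := by
        rw [huy, norm_smul, norm_inv, norm_norm, inv_mul_cancel₀ (by positivity)]
      have e3 : ‖uz - uy‖ ≤ 1 / 50 := by
        calc ‖uz - uy‖ = ‖(uz - ux) - (uy - ux)‖ := by congr 1; abel
          _ ≤ ‖uz - ux‖ + ‖uy - ux‖ := norm_sub_le _ _
          _ ≤ 1 / 50 := by linarith
      have e4 : f z - c • f y = ‖f z‖ • (uz - uy) + (‖f z‖ - c * ‖f y‖) • uy := by
        conv_lhs => rw [hfz, hfy]
        module
      rw [e4]
      refine (norm_add_le _ _).trans ?_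
      rw [norm_smul, norm_smul, norm_norm, hny, mul_one, Real.norm_eq_abs]
      have := mul_le_mul_of_nonneg_left e3 (norm_nonneg (f z))
      linarith
    have hgapB : ∀ y ∈ B, ∀ z ∈ B, y ≠ z → ‖f y‖ ≤ ‖f z‖ → 5 / 4 * ‖f y‖ ≤ ‖f z‖ := by
      intro y hy z hz hne hle
      have e1 := hgap y (hP _ (hBP y hy)) z (hP _ (hBP z hz)) hne
      have e2 := hdist y hy z hz 1
      rw [one_smul, one_mul, abs_of_nonneg (by linarith)] at e2
      have := hpos y (hBP y hy)
      linarith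
    have hpadeB : ∀ y ∈ B, ∀ z ∈ B, 17 ≤ ‖f y‖ → ‖f z‖ ≤ 30 * ‖f y‖ := by
      intro y hy z hz h17
      by_contra! hlt
      have hy0 : 0 < ‖f y‖ := by linarith
      set n := ⌊‖f z‖ / ‖f y‖ / 2⌋₊ with hn
      have hn1 : (n : ℝ) ≤ ‖f z‖ / ‖f y‖ / 2 := Nat.floor_le (by positivity)
      have hn2 : ‖f z‖ / ‖f y‖ / 2 < n + 1 := Nat.lt_floor_add_one _
      rw [div_div, div_lt_iff₀ (by positivity)] at hn2
      rw [div_div, le_div_iff₀ (by positivity)] at hn1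
      have hn14 : (14 : ℝ) < n := by
        by_contra! h
        nlinarith
      have hnpos : 0 < n := by
        have : (0 : ℝ) < n := by linarith
        exact_mod_cast this
      have e1 := hpade y (hP _ (hBP y hy)) z (hP _ (hBP z hz)) n hnpos
      have e2 := hdist y hy z hz (2 * n)
      rw [abs_of_nonneg (by linarith)] at e2
      rw [hlog32] at e1
      nlinarith
    have hsplit := Finset.card_filter_add_card_filter_not (s := B) (fun y => ‖f y‖ ≤ 17)
    have hc1 : {y ∈ B | ‖f y‖ ≤ 17}.card ≤ 20 := by
      rcases {y ∈ B | ‖f y‖ ≤ 17}.eq_empty_or_nonempty with h | h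
      · simp [h]
      obtain ⟨z, hz, hz2⟩ := exists_pow_mul_le_of_gap {y ∈ B | ‖f y‖ ≤ 17} (fun y => ‖f y‖)
        (A := 5) (c := 5 / 4) (by norm_num)
        (fun y hy => (hpos y (hBP y (mem_filter.1 hy).1)).le)
        (fun y hy z hz => hgapB y (mem_filter.1 hy).1 z (mem_filter.1 hz).1) h
      by_contra! hlt
      have e1 := (mem_filter.1 hz).2
      have e2 : (5 / 4 : ℝ) ^ 20 ≤ (5 / 4) ^ ({y ∈ B | ‖f y‖ ≤ 17}.card - 1) :=
        pow_le_pow_right₀ (by norm_num) (by omega)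
      norm_num at e2
      linarith
    have hc2 : {y ∈ B | 17 < ‖f y‖}.card ≤ 20 := by
      rcases {y ∈ B | 17 < ‖f y‖}.eq_empty_or_nonempty with h | h
      · simp [h]
      obtain ⟨y, hy, hmin⟩ := exists_min_image {y ∈ B | 17 < ‖f y‖} (fun y => ‖f y‖) h
      obtain ⟨z, hz, hz2⟩ := exists_pow_mul_le_of_gap {y ∈ B | 17 < ‖f y‖} (fun y => ‖f y‖)
        (A := ‖f y‖) (c := 5 / 4) (by norm_num) hmin
        (fun y hy z hz => hgapB y (mem_filter.1 hy).1 z (mem_filter.1 hz).1) h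
      by_contra! hlt
      have h17 := (mem_filter.1 hy).2
      have e1 := hpadeB y (mem_filter.1 hy).1 z (mem_filter.1 hz).1 h17.le
      have e2 : (5 / 4 : ℝ) ^ 20 ≤ (5 / 4) ^ ({y ∈ B | 17 < ‖f y‖}.card - 1) :=
        pow_le_pow_right₀ (by norm_num) (by omega)
      norm_num at e2
      nlinarith
    simp only [not_le] at hsplit
    omega
  have hcard : P₁.card + P₂.card = P.card := Finset.card_filter_add_card_filter_not _
  have h3 : (P.card : ℝ) ≤ 2 ^ (8 * (k + 1)) := by
    have e1 : (1 + 2 * 5 / (9 / 200) : ℝ) ^ k ≤ 256 ^ k :=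
      pow_le_pow_left₀ (by norm_num) (by norm_num) k
    have e2 : (1 + 2 * 1 / (1 / 100) : ℝ) ^ k ≤ 256 ^ k :=
      pow_le_pow_left₀ (by norm_num) (by norm_num) k
    have e3 : (2 : ℝ) ^ (8 * (k + 1)) = 256 * 256 ^ k := by
      rw [pow_mul, pow_succ]; norm_num [mul_comm]
    have e4 : (0 : ℝ) ≤ 256 ^ k := by positivity
    rw [← hcard, e3]
    push_cast at h1 h2 ⊢
    linarith
  exact_mod_cast h3

section Pade

variable {K : Type*} [Field K]

/-- The residue at `T = 0` of `T⁻ᵖ (T + u)⁻ᵠ (T + w)⁻ʳ`. -/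
noncomputable def tripleResidue (p q r : ℕ) (u w : K) : K :=
  PowerSeries.coeff p (PowerSeries.X *
    ((PowerSeries.C u + PowerSeries.X)⁻¹ ^ q * (PowerSeries.C w + PowerSeries.X)⁻¹ ^ r))

theorem PowerSeries.C_add_X_mul_inv {u : K} (hu : u ≠ 0) :
    (C u + X : PowerSeries K) * (C u + X)⁻¹ = 1 :=
  PowerSeries.mul_inv_cancel _ (by simpa using hu)

theorem tripleResidue_swap (p q r : ℕ) (u w : K) :
    tripleResidue p q r u w = tripleResidue p r q w u := by
  rw [tripleResidue, tripleResidue, mul_comm (_ ^ q)]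

theorem mul_tripleResidue_succ_succ (p q r : ℕ) {u : K} (w : K) (hu : u ≠ 0) :
    u * tripleResidue (p + 1) (q + 1) r u w =
      tripleResidue (p + 1) q r u w - tripleResidue p (q + 1) r u w := by
  have h := PowerSeries.C_add_X_mul_inv hu
  simp only [tripleResidue, PowerSeries.coeff_succ_X_mul]
  rw [← PowerSeries.coeff_C_mul, ← map_sub]
  congr 1
  linear_combination ((PowerSeries.C u + PowerSeries.X)⁻¹ ^ q *
    (PowerSeries.C w + PowerSeries.X)⁻¹ ^ r) * h

theorem sub_mul_tripleResidue (p q r : ℕ) {u w : K} (hu : u ≠ 0) (hw : w ≠ 0) :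
    (w - u) * tripleResidue p (q + 1) (r + 1) u w =
      tripleResidue p (q + 1) r u w - tripleResidue p q (r + 1) u w := by
  have h := PowerSeries.C_add_X_mul_inv hu
  have h' := PowerSeries.C_add_X_mul_inv hw
  simp only [tripleResidue]
  rw [← PowerSeries.coeff_C_mul, ← map_sub, map_sub]
  congr 1
  set α := (PowerSeries.C u + PowerSeries.X : PowerSeries K)⁻¹
  set β := (PowerSeries.C w + PowerSeries.X : PowerSeries K)⁻¹
  linear_combination PowerSeries.X * α ^ q * β ^ r * (α * h' - β * h)

theorem tripleResidue_derivative (p q r : ℕ) (u w : K) :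
    p * tripleResidue (p + 1) q r u w + q * tripleResidue p (q + 1) r u w +
      r * tripleResidue p q (r + 1) u w = 0 := by
  cases p with
  | zero => simp [tripleResidue]
  | succ p =>
    simp only [tripleResidue, PowerSeries.coeff_succ_X_mul]
    set α := (PowerSeries.C u + PowerSeries.X : PowerSeries K)⁻¹ with hα
    set β := (PowerSeries.C w + PowerSeries.X : PowerSeries K)⁻¹ with hβ
    have h1 : PowerSeries.derivative K α = - α ^ 2 := by
      rw [hα, PowerSeries.derivative_inv']; simp
    have h2 : PowerSeries.derivative K β = - β ^ 2 := by
      rw [hβ, PowerSeries.derivative_inv']; simp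
    have h3 : PowerSeries.derivative K (α ^ q * β ^ r) =
        -(PowerSeries.C (q : K) * (α ^ (q + 1) * β ^ r) +
          PowerSeries.C (r : K) * (α ^ q * β ^ (r + 1))) := by
      have hp : ∀ γ : PowerSeries K, PowerSeries.derivative K γ = - γ ^ 2 → ∀ m : ℕ,
          PowerSeries.derivative K (γ ^ m) = -(PowerSeries.C (m : K) * γ ^ (m + 1)) := by
        intro γ hγ m
        cases m with
        | zero => simp
        | succ m =>
          rw [Derivation.leibniz_pow, hγ]
          simp only [smul_eq_mul, nsmul_eq_mul, map_natCast, Nat.add_sub_cancel]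
          ring
      rw [Derivation.leibniz, hp α h1, hp β h2]
      simp only [smul_eq_mul]
      ring
    have h4 := PowerSeries.coeff_derivative (α ^ q * β ^ r) p
    rw [h3] at h4
    simp only [map_neg, map_add, PowerSeries.coeff_C_mul] at h4
    push_cast
    linear_combination -h4

/-- The three-point numerator: `tripleResidue` with its denominator cleared. -/
def tripleNumerator (p q r : ℕ) (u w : K) : K :=
  (-1) ^ p * ∑ ij ∈ Finset.HasAntidiagonal.antidiagonal p,
    ((q + ij.1).choose q : K) * ((r + ij.2).choose r : K) * (u ^ ij.2 * w ^ ij.1)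

theorem PowerSeries.coeff_C_add_X_inv_pow (k i : ℕ) {u : K} (hu : u ≠ 0) :
    coeff i ((C u + X : PowerSeries K)⁻¹ ^ (k + 1)) =
      (-1) ^ i * ((k + i).choose k : K) * u⁻¹ ^ (k + 1 + i) := by
  have h1 : (C u + X : PowerSeries K)⁻¹ = C u⁻¹ * rescale (-u⁻¹) (mk 1) := by
    symm
    rw [PowerSeries.eq_inv_iff_mul_eq_one (by simpa using hu)]
    have h2 : (C u⁻¹ * (C u + X) : PowerSeries K) = rescale (-u⁻¹) (1 - X) := by
      rw [mul_add, ← map_mul, inv_mul_cancel₀ hu]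
      simp
    rw [mul_right_comm, h2, ← map_mul, mul_comm, mk_one_mul_one_sub_eq_one, map_one]
  rw [h1, mul_pow, ← map_pow, ← map_pow, coeff_C_mul, coeff_rescale, mk_one_pow_eq_mk_choose_add,
    coeff_mk, neg_eq_neg_one_mul, mul_pow]
  ring

theorem tripleResidue_eq (p q r : ℕ) {u w : K} (hu : u ≠ 0) (hw : w ≠ 0) :
    tripleResidue (p + 1) (q + 1) (r + 1) u w * (u ^ (p + q + 1) * w ^ (p + r + 1)) =
      tripleNumerator p q r u w := by
  rw [tripleResidue, PowerSeries.coeff_succ_X_mul, PowerSeries.coeff_mul, tripleNumerator,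
    Finset.sum_mul, Finset.mul_sum]
  refine Finset.sum_congr rfl fun ij hij => ?_
  rw [Finset.HasAntidiagonal.mem_antidiagonal] at hij
  rw [PowerSeries.coeff_C_add_X_inv_pow _ _ hu, PowerSeries.coeff_C_add_X_inv_pow _ _ hw]
  obtain ⟨i, j⟩ := ij
  simp only at hij ⊢
  subst hij
  have e1 : u ^ (i + j + q + 1) = u ^ (q + 1 + i) * u ^ j := by ring
  have e2 : w ^ (i + j + r + 1) = w ^ (r + 1 + j) * w ^ i := by ring
  rw [e1, e2, inv_pow, inv_pow, pow_add (-1) i j]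
  field_simp

theorem tripleNumerator_mem (O : Subring K) (p q r : ℕ) {u w : K} (hu : u ∈ O) (hw : w ∈ O) :
    tripleNumerator p q r u w ∈ O :=
  mul_mem (pow_mem (neg_mem (one_mem _)) _) (sum_mem fun _ _ =>
    mul_mem (mul_mem (natCast_mem _ _) (natCast_mem _ _)) (mul_mem (pow_mem hu _) (pow_mem hw _)))

theorem AbsoluteValue.map_natCast_le (v : AbsoluteValue K ℝ) (n : ℕ) : v n ≤ n := by
  induction n with
  | zero => simp
  | succ n ih =>
    push_cast
    exact (v.add_le _ _).trans (by rw [v.map_one]; linarith)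

theorem AbsoluteValue.tripleNumerator_le (v : AbsoluteValue K ℝ) (p q r : ℕ) {u w : K} {M : ℝ}
    (hu : v u ≤ M) (hw : v w ≤ M) :
    v (tripleNumerator p q r u w) ≤ 2 ^ (2 * p + q + r) * M ^ p := by
  have hM : 0 ≤ M := (v.nonneg u).trans hu
  rw [tripleNumerator, v.map_mul, v.map_pow, v.map_neg, v.map_one, one_pow, one_mul]
  refine (v.sum_le _ _).trans ?_
  have h1 : ∀ ij ∈ Finset.HasAntidiagonal.antidiagonal p,
      v (((q + ij.1).choose q : K) * ((r + ij.2).choose r : K) * (u ^ ij.2 * w ^ ij.1)) ≤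
        2 ^ (p + q + r) * M ^ p := by
    rintro ⟨i, j⟩ hij
    rw [Finset.HasAntidiagonal.mem_antidiagonal] at hij
    simp only at hij ⊢
    rw [v.map_mul, v.map_mul, v.map_mul, v.map_pow, v.map_pow]
    have e1 : v ((q + i).choose q : K) ≤ 2 ^ (q + i) :=
      (v.map_natCast_le _).trans (by exact_mod_cast Nat.choose_le_two_pow _ _)
    have e2 : v ((r + j).choose r : K) ≤ 2 ^ (r + j) :=
      (v.map_natCast_le _).trans (by exact_mod_cast Nat.choose_le_two_pow _ _)
    calc _ ≤ (2 ^ (q + i) * 2 ^ (r + j)) * (M ^ j * M ^ i) := by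
          gcongr
      _ = 2 ^ (p + q + r) * M ^ p := by subst hij; ring
  refine (Finset.sum_le_card_nsmul _ _ _ h1).trans ?_
  rw [Finset.Nat.card_antidiagonal, nsmul_eq_mul, ← mul_assoc]
  gcongr
  have : ((p + 1 : ℕ) : ℝ) ≤ 2 ^ p := by exact_mod_cast Nat.lt_two_pow_self
  calc ((p + 1 : ℕ) : ℝ) * 2 ^ (p + q + r) ≤ 2 ^ p * 2 ^ (p + q + r) := by gcongr
    _ = 2 ^ (2 * p + q + r) := by ring

theorem IsNonarchimedean.sum_le_of_forall_le {α : Type*} {v : AbsoluteValue K ℝ}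
    (hv : IsNonarchimedean v) {s : Finset α} {f : α → K} {B : ℝ} (hB : 0 ≤ B)
    (h : ∀ i ∈ s, v (f i) ≤ B) : v (∑ i ∈ s, f i) ≤ B := by
  classical
  induction s using Finset.induction_on with
  | empty => simpa using hB
  | insert a s ha ih =>
    rw [Finset.sum_insert ha]
    exact (hv _ _).trans (max_le (h a (Finset.mem_insert_self _ _))
      (ih fun i hi => h i (Finset.mem_insert_of_mem hi)))

theorem IsNonarchimedean.tripleNumerator_le {v : AbsoluteValue K ℝ} (hv : IsNonarchimedean v)
    (p q r : ℕ) {u w : K} {M : ℝ} (hu : v u ≤ M) (hw : v w ≤ M) :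
    v (tripleNumerator p q r u w) ≤ M ^ p := by
  have hM : 0 ≤ M := (v.nonneg u).trans hu
  rw [tripleNumerator, v.map_mul, v.map_pow, v.map_neg, v.map_one, one_pow, one_mul]
  refine hv.sum_le_of_forall_le (by positivity) ?_
  rintro ⟨i, j⟩ hij
  rw [Finset.HasAntidiagonal.mem_antidiagonal] at hij
  simp only at hij ⊢
  rw [v.map_mul, v.map_mul, v.map_mul, v.map_pow, v.map_pow]
  have e1 : v ((q + i).choose q : K) ≤ 1 := hv.apply_natCast_le_one
  have e2 : v ((r + j).choose r : K) ≤ 1 := hv.apply_natCast_le_one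
  calc _ ≤ (1 * 1) * (M ^ j * M ^ i) := by gcongr
    _ = M ^ p := by subst hij; ring

end Pade

section Contiguity

variable {K : Type*} [Field K]

/-- The linear combination with weights `l, m, k` of the residues at `a, b, c` of
`(T - a)⁻ᵖ (T - b)⁻ᵠ (T - c)⁻ʳ`. -/
noncomputable def residueForm (a b c l m k : K) (p q r : ℕ) : K :=
  l * tripleResidue p q r (a - b) (a - c) + m * tripleResidue q p r (b - a) (b - c) +
    k * tripleResidue r p q (c - a) (c - b)

variable {a b c : K} (hab : a ≠ b) (hac : a ≠ c) (hbc : b ≠ c) (l m k : K)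

include hab hac hbc

theorem sub_mul_residueForm_fst_snd (p q r : ℕ) :
    (a - b) * residueForm a b c l m k (p + 1) (q + 1) r =
      residueForm a b c l m k (p + 1) q r - residueForm a b c l m k p (q + 1) r := by
  have h1 := mul_tripleResidue_succ_succ p q r (a - c) (sub_ne_zero.2 hab)
  have h2 := mul_tripleResidue_succ_succ q p r (b - c) (sub_ne_zero.2 hab.symm)
  have h3 := sub_mul_tripleResidue r p q (sub_ne_zero.2 hac.symm) (sub_ne_zero.2 hbc.symm)
  simp only [residueForm]
  linear_combination l * h1 - m * h2 + k * h3

theorem sub_mul_residueForm_snd_thd (p q r : ℕ) :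
    (b - c) * residueForm a b c l m k p (q + 1) (r + 1) =
      residueForm a b c l m k p (q + 1) r - residueForm a b c l m k p q (r + 1) := by
  have h1 := sub_mul_tripleResidue p q r (sub_ne_zero.2 hab) (sub_ne_zero.2 hac)
  have h2 := mul_tripleResidue_succ_succ q r p (b - a) (sub_ne_zero.2 hbc)
  have h3 := mul_tripleResidue_succ_succ r q p (c - a) (sub_ne_zero.2 hbc.symm)
  simp only [tripleResidue_swap _ _ p] at h2 h3
  simp only [residueForm]
  linear_combination l * h1 + m * h2 - k * h3

theorem sub_mul_residueForm_fst_thd (p q r : ℕ) :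
    (a - c) * residueForm a b c l m k (p + 1) q (r + 1) =
      residueForm a b c l m k (p + 1) q r - residueForm a b c l m k p q (r + 1) := by
  have h1 := mul_tripleResidue_succ_succ p r q (a - b) (sub_ne_zero.2 hac)
  have h2 := sub_mul_tripleResidue q p r (sub_ne_zero.2 hab.symm) (sub_ne_zero.2 hbc)
  have h3 := mul_tripleResidue_succ_succ r p q (c - b) (sub_ne_zero.2 hac.symm)
  simp only [tripleResidue_swap _ _ q _ (a - b)] at h1
  simp only [residueForm]
  linear_combination l * h1 + m * h2 - k * h3

omit hab hac hbc in
theorem residueForm_derivative (p q r : ℕ) :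
    p * residueForm a b c l m k (p + 1) q r + q * residueForm a b c l m k p (q + 1) r +
      r * residueForm a b c l m k p q (r + 1) = 0 := by
  have h1 := tripleResidue_derivative p q r (a - b) (a - c)
  have h2 := tripleResidue_derivative q p r (b - a) (b - c)
  have h3 := tripleResidue_derivative r p q (c - a) (c - b)
  simp only [residueForm]
  linear_combination l * h1 + m * h2 + k * h3

/-- The residues of a rational function with a zero of order two at infinity sum to zero. -/
theorem residueForm_one_eq_zero (p q r : ℕ) (h : 2 ≤ p + q + r) :
    residueForm a b c 1 1 1 p q r = 0 := by
  have sab := sub_ne_zero.2 hab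
  have sac := sub_ne_zero.2 hac
  have sbc := sub_ne_zero.2 hbc
  have sba := sub_ne_zero.2 hab.symm
  have sca := sub_ne_zero.2 hac.symm
  have scb := sub_ne_zero.2 hbc.symm
  have hX : ∀ n, tripleResidue (K := K) (n + 2) 0 0 = fun _ _ => 0 := by
    intro n; ext u w
    simp [tripleResidue, PowerSeries.coeff_X]
  have h0 : ∀ n m, tripleResidue (K := K) 0 n m = fun _ _ => 0 := by
    intro n m; ext u w; simp [tripleResidue]
  have h110 : ∀ u w : K, tripleResidue 1 1 0 u w = u⁻¹ := by
    intro u w; simp [tripleResidue, PowerSeries.coeff_succ_X_mul]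
  have h101 : ∀ u w : K, tripleResidue 1 0 1 u w = w⁻¹ := by
    intro u w; simp [tripleResidue, PowerSeries.coeff_succ_X_mul]
  induction hs : p + q + r using Nat.strong_induction_on generalizing p q r with
  | _ s ih =>
  by_cases h3 : 3 ≤ p + q + r
  · rcases p with _ | p <;> rcases q with _ | q
    · obtain ⟨r, rfl⟩ : ∃ t, r = t + 2 := ⟨r - 2, by omega⟩
      simp [residueForm, h0, hX]
    · rcases r with _ | r
      · obtain ⟨q, rfl⟩ : ∃ t, q = t + 1 := ⟨q - 1, by omega⟩
        simp [residueForm, h0, hX]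
      · refine (mul_eq_zero_iff_left sbc).1 ?_
        rw [sub_mul_residueForm_snd_thd hab hac hbc,
          ih _ (by omega) 0 (q + 1) r (by omega) rfl, ih _ (by omega) 0 q (r + 1) (by omega) rfl,
          sub_zero]
    · rcases r with _ | r
      · obtain ⟨p, rfl⟩ : ∃ t, p = t + 1 := ⟨p - 1, by omega⟩
        simp [residueForm, h0, hX]
      · refine (mul_eq_zero_iff_left sac).1 ?_
        rw [sub_mul_residueForm_fst_thd hab hac hbc,
          ih _ (by omega) (p + 1) 0 r (by omega) rfl, ih _ (by omega) p 0 (r + 1) (by omega) rfl,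
          sub_zero]
    · refine (mul_eq_zero_iff_left sab).1 ?_
      rw [sub_mul_residueForm_fst_snd hab hac hbc,
        ih _ (by omega) (p + 1) q r (by omega) rfl, ih _ (by omega) p (q + 1) r (by omega) rfl,
        sub_zero]
  · have hcases : (p = 2 ∧ q = 0 ∧ r = 0) ∨ (p = 0 ∧ q = 2 ∧ r = 0) ∨ (p = 0 ∧ q = 0 ∧ r = 2) ∨
        (p = 1 ∧ q = 1 ∧ r = 0) ∨ (p = 1 ∧ q = 0 ∧ r = 1) ∨ (p = 0 ∧ q = 1 ∧ r = 1) := by omega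
    have hX2 := hX 0
    rw [zero_add] at hX2
    rcases hcases with ⟨rfl, rfl, rfl⟩ | ⟨rfl, rfl, rfl⟩ | ⟨rfl, rfl, rfl⟩ | ⟨rfl, rfl, rfl⟩ |
      ⟨rfl, rfl, rfl⟩ | ⟨rfl, rfl, rfl⟩
    · simp [residueForm, h0, hX2]
    · simp [residueForm, h0, hX2]
    · simp [residueForm, h0, hX2]
    · simp only [residueForm, h0, h110]
      rw [← neg_sub a b, inv_neg]; ring
    · simp only [residueForm, h0, h101, h110]
      rw [← neg_sub a c, inv_neg]; ring
    · simp only [residueForm, h0, h101]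
      rw [← neg_sub b c, inv_neg]; ring

variable [CharZero K]

theorem residueForm_eq_zero_of_succ_snd_thd {p q r : ℕ} (h : p + q + r ≠ 0)
    (h1 : residueForm a b c l m k (p + 1) (q + 1) r = 0)
    (h2 : residueForm a b c l m k (p + 1) q (r + 1) = 0) :
    residueForm a b c l m k (p + 1) q r = 0 := by
  have e1 := sub_mul_residueForm_fst_snd hab hac hbc l m k p q r
  have e2 := sub_mul_residueForm_fst_thd hab hac hbc l m k p q r
  have e3 := residueForm_derivative (a := a) (b := b) (c := c) l m k p q r
  rw [h1, mul_zero] at e1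
  rw [h2, mul_zero] at e2
  have h' : ((p + q + r : ℕ) : K) ≠ 0 := by exact_mod_cast h
  refine (mul_eq_zero_iff_left h').1 ?_
  push_cast
  linear_combination e3 - q * e1 - r * e2

theorem residueForm_eq_zero_of_succ_fst_thd {p q r : ℕ} (h : p + q + r ≠ 0)
    (h1 : residueForm a b c l m k (p + 1) (q + 1) r = 0)
    (h2 : residueForm a b c l m k p (q + 1) (r + 1) = 0) :
    residueForm a b c l m k p (q + 1) r = 0 := by
  have e1 := sub_mul_residueForm_fst_snd hab hac hbc l m k p q r
  have e2 := sub_mul_residueForm_snd_thd hab hac hbc l m k p q r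
  have e3 := residueForm_derivative (a := a) (b := b) (c := c) l m k p q r
  rw [h1, mul_zero] at e1
  rw [h2, mul_zero] at e2
  have h' : ((p + q + r : ℕ) : K) ≠ 0 := by exact_mod_cast h
  refine (mul_eq_zero_iff_left h').1 ?_
  push_cast
  linear_combination e3 + p * e1 - r * e2

/-- Two neighbouring Padé approximants are never proportional at a point: a linear form
vanishing on both vanishes on all vectors with coordinate sum zero. -/
theorem residueForm_ne_zero_or (h : ¬ (l = m ∧ l = k)) (n : ℕ) :
    residueForm a b c l m k (n + 1) (n + 1) n ≠ 0 ∨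
      residueForm a b c l m k (n + 1) n (n + 1) ≠ 0 := by
  by_contra! h0
  induction n with
  | zero =>
    have h110 : ∀ u w : K, tripleResidue 1 1 0 u w = u⁻¹ := by
      intro u w; simp [tripleResidue, PowerSeries.coeff_succ_X_mul]
    have h101 : ∀ u w : K, tripleResidue 1 0 1 u w = w⁻¹ := by
      intro u w; simp [tripleResidue, PowerSeries.coeff_succ_X_mul]
    have h011 : ∀ u w : K, tripleResidue 0 1 1 u w = 0 := by
      intro u w; simp [tripleResidue]
    obtain ⟨e1, e2⟩ := h0
    simp only [residueForm, zero_add, h110, h101, h011] at e1 e2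
    rw [← neg_sub a b, inv_neg] at e1
    rw [← neg_sub a c, inv_neg] at e2
    have i1 := inv_ne_zero (sub_ne_zero.2 hab)
    have i2 := inv_ne_zero (sub_ne_zero.2 hac)
    refine h ⟨?_, ?_⟩
    · rw [← sub_eq_zero]
      refine (mul_eq_zero_iff_right i1).1 ?_
      linear_combination e1
    · rw [← sub_eq_zero]
      refine (mul_eq_zero_iff_right i2).1 ?_
      linear_combination e2
  | succ n ih =>
    obtain ⟨e1, e2⟩ := h0
    have R1 := sub_mul_residueForm_fst_snd hab hac hbc l m k
    have R2 := sub_mul_residueForm_snd_thd hab hac hbc l m k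
    have sbc := sub_ne_zero.2 hbc
    have g222 : residueForm a b c l m k (n + 2) (n + 2) (n + 2) = 0 := by
      refine (mul_eq_zero_iff_left sbc).1 ?_
      rw [R2 (n + 2) (n + 1) (n + 1), e1, e2, sub_zero]
    have g122 : residueForm a b c l m k (n + 1) (n + 2) (n + 2) = 0 := by
      have := R1 (n + 1) (n + 1) (n + 2)
      rw [g222, mul_zero, e2] at this
      linear_combination this
    have g211 : residueForm a b c l m k (n + 2) (n + 1) (n + 1) = 0 :=
      residueForm_eq_zero_of_succ_snd_thd hab hac hbc l m k
        (p := n + 1) (by omega) e1 e2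
    have g121 : residueForm a b c l m k (n + 1) (n + 2) (n + 1) = 0 :=
      residueForm_eq_zero_of_succ_fst_thd hab hac hbc l m k
        (q := n + 1) (by omega) e1 g122
    have g112 : residueForm a b c l m k (n + 1) (n + 1) (n + 2) = 0 := by
      have := R2 (n + 1) (n + 1) (n + 1)
      rw [g122, mul_zero, g121] at this
      linear_combination this
    have g111 : residueForm a b c l m k (n + 1) (n + 1) (n + 1) = 0 :=
      residueForm_eq_zero_of_succ_snd_thd hab hac hbc l m k
        (by omega) g121 g112
    have g120 : residueForm a b c l m k (n + 1) (n + 2) n = 0 := by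
      have := R2 (n + 1) (n + 1) n
      rw [g121, mul_zero, g111] at this
      linear_combination -this
    have g102 : residueForm a b c l m k (n + 1) n (n + 2) = 0 := by
      have := R2 (n + 1) n (n + 1)
      rw [g112, mul_zero, g111] at this
      linear_combination this
    exact ih ⟨residueForm_eq_zero_of_succ_snd_thd hab hac hbc l m k
        (by omega) g120 g111,
      residueForm_eq_zero_of_succ_snd_thd hab hac hbc l m k
        (by omega) g111 g102⟩

end Contiguity

section PadeValue

variable {K : Type*} [Field K]

/-- The properties of a value `A` at `(x, y)` of an integral polynomial of degree at most `n`
with coefficients of exponential size. -/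
structure IsPadeValue (n : ℕ) (x y A : K) : Prop where
  mem : ∀ O : Subring K, x ∈ O → y ∈ O → A ∈ O
  le : ∀ (v : AbsoluteValue K ℝ) (M : ℝ), 1 ≤ M → v x ≤ M → v y ≤ M → v A ≤ 16 ^ n * M ^ n
  le_of_isNonarchimedean : ∀ v : AbsoluteValue K ℝ, IsNonarchimedean v → ∀ M : ℝ, 1 ≤ M →
    v x ≤ M → v y ≤ M → v A ≤ M ^ n

theorem IsPadeValue.neg {n : ℕ} {x y A : K} (h : IsPadeValue n x y A) : IsPadeValue n x y (-A) where
  mem O hx hy := neg_mem (h.mem O hx hy)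
  le v M hM hx hy := by rw [v.map_neg]; exact h.le v M hM hx hy
  le_of_isNonarchimedean v hv M hM hx hy := by
    rw [v.map_neg]; exact h.le_of_isNonarchimedean v hv M hM hx hy

theorem isPadeValue_pow_mul_tripleNumerator {e p q r n : ℕ} (hp : p + e ≤ n)
    (hqr : 2 * p + q + r ≤ 4 * n) {x y u w : K}
    (hu : u ∈ ({1, -1, x, -x, y, -y} : Set K)) (hw : w ∈ ({1, -1, x, -x, y, -y} : Set K)) :
    IsPadeValue n x y (y ^ e * tripleNumerator p q r u w) := by
  have hv : ∀ (v : AbsoluteValue K ℝ) (M : ℝ), 1 ≤ M → v x ≤ M → v y ≤ M →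
      ∀ z ∈ ({1, -1, x, -x, y, -y} : Set K), v z ≤ M := by
    intro v M hM hx hy z hz
    simp only [Set.mem_insert_iff, Set.mem_singleton_iff] at hz
    rcases hz with rfl | rfl | rfl | rfl | rfl | rfl <;> simpa
  have hO : ∀ O : Subring K, x ∈ O → y ∈ O →
      ∀ z ∈ ({1, -1, x, -x, y, -y} : Set K), z ∈ O := by
    intro O hx hy z hz
    simp only [Set.mem_insert_iff, Set.mem_singleton_iff] at hz
    rcases hz with rfl | rfl | rfl | rfl | rfl | rfl <;> simp [*]
  refine ⟨fun O hx hy => mul_mem (pow_mem hy e)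
    (tripleNumerator_mem O p q r (hO O hx hy u hu) (hO O hx hy w hw)),
    fun v M hM hx hy => ?_, fun v hna M hM hx hy => ?_⟩
  · have h1 := v.tripleNumerator_le p q r (hv v M hM hx hy u hu) (hv v M hM hx hy w hw)
    rw [v.map_mul, v.map_pow]
    calc v y ^ e * v (tripleNumerator p q r u w)
        ≤ M ^ e * (2 ^ (2 * p + q + r) * M ^ p) := by gcongr
      _ = 2 ^ (2 * p + q + r) * M ^ (p + e) := by ring
      _ ≤ 2 ^ (4 * n) * M ^ n := by gcongr; norm_num
      _ = 16 ^ n * M ^ n := by rw [pow_mul]; norm_num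
  · have h1 := hna.tripleNumerator_le p q r (hv v M hM hx hy u hu) (hv v M hM hx hy w hw)
    rw [v.map_mul, v.map_pow]
    calc v y ^ e * v (tripleNumerator p q r u w) ≤ M ^ e * M ^ p := by gcongr
      _ = M ^ (p + e) := by ring
      _ ≤ M ^ n := by gcongr

theorem isPadeValue_tripleNumerator {p q r n : ℕ} (hp : p ≤ n)
    (hqr : 2 * p + q + r ≤ 4 * n) {x y u w : K}
    (hu : u ∈ ({1, -1, x, -x, y, -y} : Set K)) (hw : w ∈ ({1, -1, x, -x, y, -y} : Set K)) :
    IsPadeValue n x y (tripleNumerator p q r u w) := by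
  simpa using isPadeValue_pow_mul_tripleNumerator (e := 0) hp hqr hu hw

/-- Padé approximation: at a point `(x, y)` of the line `x + y = 1` there is a small vector
`(A, B, C)` orthogonal to `(x ^ (2n), y ^ (2n), 1)` which is not orthogonal to the image of a
given second point of the line. -/
theorem exists_isPadeValue [CharZero K] {x y s t : K} (hx : x ≠ 0) (hy : y ≠ 0) (hxy : x + y = 1)
    (hst : s + t = 1) (m : ℕ) : ∃ A B C : K, IsPadeValue (m + 1) x y A ∧
      IsPadeValue (m + 1) x y B ∧ IsPadeValue (m + 1) x y C ∧
      x ^ (2 * (m + 1)) * A + y ^ (2 * (m + 1)) * B + C = 0 ∧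
      A * (t / y ^ (2 * (m + 1))) - B * (s / x ^ (2 * (m + 1))) ≠ 0 := by
  have hy1 : y ≠ 1 := by rintro rfl; exact hx (by linear_combination hxy)
  have hxe : (1 : K) - y = x := by linear_combination -hxy
  have hxe' : y - 1 = -x := by linear_combination hxy
  have h01 : (0 : K) ≠ 1 := zero_ne_one
  have hne : ¬ (t = -s ∧ t = 0) := by
    rintro ⟨h1, h2⟩
    exact one_ne_zero (α := K) (by rw [← hst, h1]; ring)
  have hu1 : (-1 : K) ≠ 0 := neg_ne_zero.2 one_ne_zero
  have hmy : -y ≠ 0 := neg_ne_zero.2 hy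
  have hmx : -x ≠ 0 := neg_ne_zero.2 hx
  have i1 : m + 1 + (m + 1) + 1 = 2 * (m + 1) + 1 := by omega
  have i2 : m + 1 + m + 1 = 2 * (m + 1) := by omega
  have i3 : m + (m + 1) + 1 = 2 * (m + 1) := by omega
  have hev : Even (2 * (m + 1)) := even_two_mul _
  have hX := pow_ne_zero (2 * (m + 1)) hx
  have hY := pow_ne_zero (2 * (m + 1)) hy
  rcases residueForm_ne_zero_or h01 hy.symm hy1.symm t (-s) 0 hne (m + 1) with h | h
  · have hsum := residueForm_one_eq_zero h01 hy.symm hy1.symm (m + 2) (m + 2) (m + 1) (by omega)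
    have ea := tripleResidue_eq (m + 1) (m + 1) m hu1 hmy
    have eb := tripleResidue_eq (m + 1) (m + 1) m one_ne_zero hx
    have ec := tripleResidue_eq m (m + 1) (m + 1) hy hmx
    refine ⟨-tripleNumerator (m + 1) (m + 1) m (-1) (-y), tripleNumerator (m + 1) (m + 1) m 1 x,
      tripleNumerator m (m + 1) (m + 1) y (-x),
      (isPadeValue_tripleNumerator (by omega) (by omega) (by simp) (by simp)).neg,
      isPadeValue_tripleNumerator (by omega) (by omega) (by simp) (by simp),
      isPadeValue_tripleNumerator (by omega) (by omega) (by simp) (by simp), ?_, ?_⟩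
    · rw [← ea, ← eb, ← ec]
      simp only [residueForm, zero_sub, sub_zero, hxe, hxe'] at hsum
      simp only [i1, i2, i3, hev.neg_pow, pow_succ _ (2 * (m + 1)), one_pow]
      linear_combination x ^ (2 * (m + 1)) * y ^ (2 * (m + 1)) * hsum
    · rw [← ea, ← eb]
      simp only [residueForm, zero_sub, sub_zero, hxe, hxe'] at h
      simp only [i1, i2, hev.neg_pow, pow_succ _ (2 * (m + 1)), one_pow]
      convert h using 1
      field_simp
      ring
  · have hsum := residueForm_one_eq_zero h01 hy.symm hy1.symm (m + 2) (m + 1) (m + 2) (by omega)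
    have ea := tripleResidue_eq (m + 1) m (m + 1) hu1 hmy
    have eb := tripleResidue_eq m (m + 1) (m + 1) one_ne_zero hx
    have ec := tripleResidue_eq (m + 1) (m + 1) m hy hmx
    refine ⟨-tripleNumerator (m + 1) m (m + 1) (-1) (-y),
      y ^ 1 * tripleNumerator m (m + 1) (m + 1) 1 x,
      tripleNumerator (m + 1) (m + 1) m y (-x),
      (isPadeValue_tripleNumerator (by omega) (by omega) (by simp) (by simp)).neg,
      isPadeValue_pow_mul_tripleNumerator (by omega) (by omega) (by simp) (by simp),
      isPadeValue_tripleNumerator (by omega) (by omega) (by simp) (by simp), ?_, ?_⟩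
    · rw [← ea, ← eb, ← ec]
      simp only [residueForm, zero_sub, sub_zero, hxe, hxe'] at hsum
      simp only [i1, i2, i3, hev.neg_pow, pow_succ _ (2 * (m + 1)), one_pow]
      linear_combination x ^ (2 * (m + 1)) * y ^ (2 * (m + 1)) * y * hsum
    · rw [← ea, ← eb]
      simp only [residueForm, zero_sub, sub_zero, hxe, hxe'] at h
      simp only [i1, i2, i3, hev.neg_pow, pow_succ _ (2 * (m + 1)), one_pow]
      have h' := mul_ne_zero hy h
      convert h' using 1
      field_simp
      ring

end PadeValue

section Nonarchimedean

variable {K : Type*} [Field K]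

theorem IsNonarchimedean.add_pow_prime_sub_le {v : AbsoluteValue K ℝ} (hv : IsNonarchimedean v)
    {p : ℕ} (hp : p.Prime) {x y : K} {B : ℝ} (hx : v x ≤ B) (hy : v y ≤ B) :
    v ((x + y) ^ p - (x ^ p + y ^ p)) ≤ v p * B ^ p := by
  have hB : 0 ≤ B := (v.nonneg x).trans hx
  rw [add_pow_prime_eq hp, add_sub_cancel_left, mul_assoc, mul_assoc, v.map_mul, ← mul_assoc,
    Finset.mul_sum]
  refine mul_le_mul_of_nonneg_left (hv.sum_le_of_forall_le (by positivity) fun k hk => ?_)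
    (v.nonneg _)
  rw [Finset.mem_Ioo] at hk
  have e : x * y * (x ^ (k - 1) * y ^ (p - k - 1) * ((p.choose k / p : ℕ) : K)) =
      x ^ k * y ^ (p - k) * ((p.choose k / p : ℕ) : K) := by
    obtain ⟨i, rfl⟩ : ∃ i, k = i + 1 := ⟨k - 1, by omega⟩
    obtain ⟨j, hj⟩ : ∃ j, p - (i + 1) = j + 1 := ⟨p - (i + 1) - 1, by omega⟩
    rw [hj]
    simp only [Nat.add_sub_cancel]
    ring
  rw [e, v.map_mul, v.map_mul, v.map_pow, v.map_pow]
  calc _ ≤ B ^ k * B ^ (p - k) * 1 := by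
        gcongr
        exact hv.apply_natCast_le_one
    _ = B ^ p := by rw [mul_one, ← pow_add]; congr 1; omega

theorem IsNonarchimedean.sum_pow_prime_sub_le {α : Type*} {v : AbsoluteValue K ℝ}
    (hv : IsNonarchimedean v) {p : ℕ} (hp : p.Prime) {s : Finset α} {f : α → K} {B : ℝ}
    (hB : 0 ≤ B) (h : ∀ i ∈ s, v (f i) ≤ B) :
    v ((∑ i ∈ s, f i) ^ p - ∑ i ∈ s, f i ^ p) ≤ v p * B ^ p := by
  classical
  induction s using Finset.induction_on with
  | empty =>
    simp only [Finset.sum_empty, sub_zero, zero_pow hp.ne_zero, v.map_zero]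
    exact mul_nonneg (v.nonneg _) (by positivity)
  | insert a s ha ih =>
    have hs : ∀ i ∈ s, v (f i) ≤ B := fun i hi => h i (Finset.mem_insert_of_mem hi)
    have h1 := hv.add_pow_prime_sub_le hp (h a (Finset.mem_insert_self _ _))
      (hv.sum_le_of_forall_le hB hs)
    rw [Finset.sum_insert ha, Finset.sum_insert ha]
    have e : (f a + ∑ i ∈ s, f i) ^ p - (f a ^ p + ∑ i ∈ s, f i ^ p) =
        ((f a + ∑ i ∈ s, f i) ^ p - (f a ^ p + (∑ i ∈ s, f i) ^ p)) +
          ((∑ i ∈ s, f i) ^ p - ∑ i ∈ s, f i ^ p) := by ring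
    rw [e]
    exact (hv _ _).trans (max_le h1 (ih hs))

end Nonarchimedean

/-- Finitely many weighted absolute values on a field `K` which satisfy Artin's inequality
on a subring of integers `O`; the archimedean ones have total weight one, and `17` is a unit. -/
structure PlaceSystem (K ι : Type*) [Field K] [Fintype ι] where
  /-- The absolute values. -/
  v : ι → AbsoluteValue K ℝ
  /-- The weights. -/
  w : ι → ℝ
  /-- The archimedean places. -/
  arch : Finset ι
  /-- The integers outside the given places. -/
  O : Subring K
  w_nonneg : ∀ i, 0 ≤ w i
  sum_arch : ∑ i ∈ arch, w i = 1
  nonarch : ∀ i ∉ arch, IsNonarchimedean (v i)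
  sum_log_nonneg : ∀ D ∈ O, D ≠ 0 → 0 ≤ ∑ i, w i * Real.log (v i D)
  arch_seventeen : ∀ i ∈ arch, v i 17 = 17
  inv_seventeen_mem : (17 : K)⁻¹ ∈ O

namespace PlaceSystem

variable {K ι : Type*} [Field K] [Fintype ι] (P : PlaceSystem K ι)

/-- The pairs of units of the ring of integers of a place system. -/
def unitPairs : Subgroup (Kˣ × Kˣ) :=
  P.O.toSubmonoid.units.prod P.O.toSubmonoid.units

theorem coe_fst_mem {u : Kˣ × Kˣ} (hu : u ∈ P.unitPairs) : (u.1 : K) ∈ P.O := hu.1.1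

theorem coe_snd_mem {u : Kˣ × Kˣ} (hu : u ∈ P.unitPairs) : (u.2 : K) ∈ P.O := hu.2.1

theorem sum_log_eq_zero {a : Kˣ} (ha : a ∈ P.O.toSubmonoid.units) :
    ∑ i, P.w i * Real.log (P.v i a) = 0 := by
  refine le_antisymm ?_ (P.sum_log_nonneg _ ha.1 a.ne_zero)
  have h := P.sum_log_nonneg ((a⁻¹ : Kˣ) : K) ha.2 (a⁻¹).ne_zero
  simp only [Units.val_inv_eq_inv_val, map_inv₀, Real.log_inv, mul_neg,
    Finset.sum_neg_distrib] at h
  linarith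

/-- The local height of a pair. -/
noncomputable def localHeight (i : ι) (u : Kˣ × Kˣ) : ℝ :=
  max 1 (max (P.v i u.1) (P.v i u.2))

/-- The logarithmic height of a pair. -/
noncomputable def height (u : Kˣ × Kˣ) : ℝ := ∑ i, P.w i * Real.log (P.localHeight i u)

theorem one_le_localHeight (i : ι) (u : Kˣ × Kˣ) : 1 ≤ P.localHeight i u := le_max_left _ _

theorem localHeight_pos (i : ι) (u : Kˣ × Kˣ) : 0 < P.localHeight i u :=
  one_pos.trans_le (P.one_le_localHeight i u)

theorem fst_le_localHeight (i : ι) (u : Kˣ × Kˣ) : P.v i u.1 ≤ P.localHeight i u :=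
  (le_max_left _ _).trans (le_max_right _ _)

theorem snd_le_localHeight (i : ι) (u : Kˣ × Kˣ) : P.v i u.2 ≤ P.localHeight i u :=
  (le_max_right _ _).trans (le_max_right _ _)

theorem log_localHeight (i : ι) (u : Kˣ × Kˣ) : Real.log (P.localHeight i u) =
    max 0 (max (Real.log (P.v i u.1)) (Real.log (P.v i u.2))) := by
  have h1 : 0 < P.v i u.1 := (P.v i).pos u.1.ne_zero
  have h2 : 0 < P.v i u.2 := (P.v i).pos u.2.ne_zero
  have hmax : ∀ a b : ℝ, 0 < a → 0 < b → Real.log (max a b) = max (Real.log a) (Real.log b) :=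
    fun a b ha hb => Real.strictMonoOn_log.monotoneOn.map_max ha hb
  rw [localHeight, hmax _ _ one_pos (lt_max_of_lt_left h1), hmax _ _ h1 h2, Real.log_one]

theorem sum_log_le {D : K} (hD : D ∈ P.O) (hD0 : D ≠ 0) {F G : ι → ℝ} (hF : ∀ i, 0 < F i)
    (h : ∀ i, F i * P.v i D ≤ G i) :
    ∑ i, P.w i * Real.log (F i) ≤ ∑ i, P.w i * Real.log (G i) := by
  have h1 : ∑ i, P.w i * Real.log (F i) + ∑ i, P.w i * Real.log (P.v i D) ≤
      ∑ i, P.w i * Real.log (G i) := by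
    rw [← Finset.sum_add_distrib]
    refine Finset.sum_le_sum fun i _ => ?_
    have hv : 0 < P.v i D := (P.v i).pos hD0
    rw [← mul_add, ← Real.log_mul (hF i).ne' hv.ne']
    exact mul_le_mul_of_nonneg_left (Real.log_le_log (mul_pos (hF i) hv) (h i)) (P.w_nonneg i)
  linarith [P.sum_log_nonneg D hD hD0]

open Classical in
theorem sum_arch_log (C : ℝ) :
    ∑ i, P.w i * Real.log (if i ∈ P.arch then C else 1) = Real.log C := by
  have : ∀ i, P.w i * Real.log (if i ∈ P.arch then C else 1) =
      if i ∈ P.arch then P.w i * Real.log C else 0 := by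
    intro i; split_ifs <;> simp
  simp only [this]
  rw [Finset.sum_ite_mem, Finset.univ_inter, ← Finset.sum_mul, P.sum_arch, one_mul]

open Classical in
theorem map_add_le (i : ι) {a b : K} {B : ℝ} (ha : P.v i a ≤ B) (hb : P.v i b ≤ B) :
    P.v i (a + b) ≤ (if i ∈ P.arch then 2 else 1) * B := by
  split_ifs with h
  · exact ((P.v i).add_le _ _).trans (by linarith)
  · rw [one_mul]
    exact (P.nonarch i h _ _).trans (max_le ha hb)

open Classical in
/-- The basic height inequality. -/
theorem nsmul_height_le {D : K} (hD : D ∈ P.O) (hD0 : D ≠ 0) {C : ℝ} (hC : 0 < C)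
    {x t : Kˣ × Kˣ} {a b : ℕ} (h : ∀ i, P.localHeight i x ^ a * P.v i D ≤
      (if i ∈ P.arch then C else 1) * (P.localHeight i x ^ b * P.localHeight i t)) :
    a * P.height x ≤ Real.log C + b * P.height x + P.height t := by
  have h1 := P.sum_log_le hD hD0 (fun i => pow_pos (P.localHeight_pos i x) a) h
  have hc : ∀ i, (if i ∈ P.arch then C else 1) ≠ 0 := by
    intro i; split_ifs
    · exact hC.ne'
    · exact one_ne_zero
  have e : ∀ i, Real.log ((if i ∈ P.arch then C else 1) *
      (P.localHeight i x ^ b * P.localHeight i t)) = Real.log (if i ∈ P.arch then C else 1) +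
        (b * Real.log (P.localHeight i x) + Real.log (P.localHeight i t)) := by
    intro i
    rw [Real.log_mul (hc i) (mul_pos (pow_pos (P.localHeight_pos i x) b)
      (P.localHeight_pos i t)).ne', Real.log_mul (pow_pos (P.localHeight_pos i x) b).ne'
      (P.localHeight_pos i t).ne', Real.log_pow]
  simp only [e, Real.log_pow, mul_add, Finset.sum_add_distrib, P.sum_arch_log] at h1
  have e2 : ∀ c : ℕ, ∑ i, P.w i * (c * Real.log (P.localHeight i x)) = c * P.height x := by
    intro c
    rw [height, Finset.mul_sum]
    exact Finset.sum_congr rfl fun i _ => by ring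
  rw [e2, e2] at h1
  rw [add_assoc]
  exact h1

theorem localHeight_pow_mul_le {i : ι} {u : Kˣ × Kˣ} {a : ℕ} {D : K} {B : ℝ}
    (h0 : P.v i D ≤ B) (h1 : P.v i (u.1 ^ a * D) ≤ B) (h2 : P.v i (u.2 ^ a * D) ≤ B) :
    P.localHeight i u ^ a * P.v i D ≤ B := by
  rw [map_mul, map_pow] at h1 h2
  rw [localHeight]
  rcases max_choice 1 (max (P.v i u.1) (P.v i u.2)) with h | h
  · rwa [h, one_pow, one_mul]
  · rw [h]
    rcases max_choice (P.v i u.1) (P.v i u.2) with h | h <;> rw [h] <;> assumption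

/-- The gap principle for heights. -/
theorem height_le_of_ne {x y : Kˣ × Kˣ} (hx : x ∈ P.unitPairs) (hy : y ∈ P.unitPairs)
    (hx1 : (x.1 : K) + x.2 = 1) (hy1 : (y.1 : K) + y.2 = 1) (hxy : x ≠ y) :
    P.height x ≤ Real.log 2 + P.height (y / x) := by
  set t := y / x with ht
  have htm : t ∈ P.unitPairs := div_mem hy hx
  have e1 : (x.1 : K) * t.1 = y.1 := by
    rw [ht, Prod.fst_div, Units.val_div_eq_div_val, mul_div_cancel₀ _ x.1.ne_zero]
  have e2 : (x.2 : K) * t.2 = y.2 := by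
    rw [ht, Prod.snd_div, Units.val_div_eq_div_val, mul_div_cancel₀ _ x.2.ne_zero]
  have hD : (t.1 : K) + -t.2 ∈ P.O :=
    add_mem (P.coe_fst_mem htm) (neg_mem (P.coe_snd_mem htm))
  have hrel1 : (x.1 : K) * (t.1 + -t.2) = 1 + -t.2 := by
    linear_combination e1 + e2 - t.2 * hx1 + hy1
  have hrel2 : (x.2 : K) * (t.1 + -t.2) = t.1 + -1 := by
    linear_combination -e1 - e2 + t.1 * hx1 - hy1
  have hD0 : (t.1 : K) + -t.2 ≠ 0 := by
    intro h0
    rw [h0, mul_zero] at hrel1 hrel2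
    refine hxy (Prod.ext (Units.ext ?_) (Units.ext ?_))
    · rw [← e1]; linear_combination (x.1 : K) * hrel2
    · rw [← e2]; linear_combination -(x.2 : K) * hrel1
  have := P.nsmul_height_le hD hD0 two_pos (x := x) (t := t) (a := 1) (b := 0) fun i => by
    have h1 := P.fst_le_localHeight i t
    have h2 := P.snd_le_localHeight i t
    have h3 := P.one_le_localHeight i t
    rw [← (P.v i).map_neg] at h2
    rw [pow_zero, one_mul]
    refine P.localHeight_pow_mul_le (P.map_add_le i h1 h2) ?_ ?_
    · rw [pow_one, hrel1]
      exact P.map_add_le i (by rwa [map_one]) h2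
    · rw [pow_one, hrel2]
      exact P.map_add_le i h1 (by rwa [map_neg_eq_map, map_one])
  simpa using this

/-- The Padé approximation principle for heights. -/
theorem mul_height_le [CharZero K] {x y : Kˣ × Kˣ} (hx : x ∈ P.unitPairs) (hy : y ∈ P.unitPairs)
    (hx1 : (x.1 : K) + x.2 = 1) (hy1 : (y.1 : K) + y.2 = 1) {n : ℕ} (hn : 0 < n) :
    n * P.height x ≤ Real.log (2 * 16 ^ n) + P.height (y / x ^ (2 * n)) := by
  classical
  obtain ⟨m, hm⟩ : ∃ m, n = m + 1 := ⟨n - 1, by omega⟩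
  set t := y / x ^ (2 * n) with ht
  have htm : t ∈ P.unitPairs := div_mem hy (pow_mem hx _)
  have hex := exists_isPadeValue x.1.ne_zero x.2.ne_zero hx1 hy1 m
  rw [← hm] at hex
  obtain ⟨A, B, C, hA, hB, hC, hABC, hD0⟩ := hex
  have e1 : (y.1 : K) / x.1 ^ (2 * n) = t.1 := by simp [ht]
  have e2 : (y.2 : K) / x.2 ^ (2 * n) = t.2 := by simp [ht]
  have f1 : (x.1 : K) ^ (2 * n) * t.1 = y.1 := by
    rw [← e1, mul_div_cancel₀ _ (pow_ne_zero _ x.1.ne_zero)]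
  have f2 : (x.2 : K) ^ (2 * n) * t.2 = y.2 := by
    rw [← e2, mul_div_cancel₀ _ (pow_ne_zero _ x.2.ne_zero)]
  rw [e1, e2, sub_eq_add_neg] at hD0
  have hmem : ∀ {z : K}, IsPadeValue n (x.1 : K) x.2 z → z ∈ P.O := fun hz =>
    hz.mem P.O (P.coe_fst_mem hx) (P.coe_snd_mem hx)
  have hD : A * t.2 + -(B * t.1) ∈ P.O :=
    add_mem (mul_mem (hmem hA) (P.coe_snd_mem htm))
      (neg_mem (mul_mem (hmem hB) (P.coe_fst_mem htm)))
  have hrel1 : (x.1 : K) ^ (2 * n) * (A * t.2 + -(B * t.1)) = -(C * t.2) + -B := by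
    linear_combination t.2 * hABC - B * (f1 + f2 + hy1)
  have hrel2 : (x.2 : K) ^ (2 * n) * (A * t.2 + -(B * t.1)) = A + C * t.1 := by
    linear_combination -t.1 * hABC + A * (f1 + f2 + hy1)
  have hpos : (0 : ℝ) < 2 * 16 ^ n := by positivity
  have := P.nsmul_height_le hD hD0 hpos (x := x) (t := t) (a := 2 * n) (b := n) fun i => by
    have h1 := P.fst_le_localHeight i t
    have h2 := P.snd_le_localHeight i t
    have h3 := P.one_le_localHeight i t
    set E : ℝ := (if i ∈ P.arch then 16 ^ n else 1) * P.localHeight i x ^ n with hE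
    have hz : ∀ {z : K}, IsPadeValue n (x.1 : K) x.2 z → P.v i z ≤ E := by
      intro z hz
      rw [hE]
      split_ifs with hi
      · exact hz.le _ _ (P.one_le_localHeight i x) (P.fst_le_localHeight i x)
          (P.snd_le_localHeight i x)
      · rw [one_mul]
        exact hz.le_of_isNonarchimedean _ (P.nonarch i hi) _ (P.one_le_localHeight i x)
          (P.fst_le_localHeight i x) (P.snd_le_localHeight i x)
    have hz' : ∀ {z s : K}, IsPadeValue n (x.1 : K) x.2 z → P.v i s ≤ P.localHeight i t →
        P.v i (z * s) ≤ E * P.localHeight i t := by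
      intro z s hz1 hs
      rw [map_mul]
      exact mul_le_mul (hz hz1) hs ((P.v i).nonneg _) (((P.v i).nonneg z).trans (hz hz1))
    have hz1 : ∀ {z : K}, IsPadeValue n (x.1 : K) x.2 z → P.v i z ≤ E * P.localHeight i t := by
      intro z hz1
      simpa using hz' (s := 1) hz1 (by rwa [map_one])
    have hc : (if i ∈ P.arch then 2 * 16 ^ n else 1 : ℝ) *
        (P.localHeight i x ^ n * P.localHeight i t) =
        (if i ∈ P.arch then 2 else 1) * (E * P.localHeight i t) := by
      rw [hE]; split_ifs <;> ring
    rw [hc]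
    refine P.localHeight_pow_mul_le (P.map_add_le i (hz' hA h2) ?_) ?_ ?_
    · rw [(P.v i).map_neg]; exact hz' hB h1
    · rw [hrel1]
      refine P.map_add_le i ?_ ?_
      · rw [(P.v i).map_neg]; exact hz' hC h2
      · rw [(P.v i).map_neg]; exact hz1 hB
    · rw [hrel2]
      exact P.map_add_le i (hz1 hA) (hz' hC h1)
  push_cast at this ⊢
  linarith

open Classical in
theorem sum_log_ite_seventeen [CharZero K] :
    ∑ i, P.w i * Real.log (if i ∈ P.arch then 6 else P.v i 17) = Real.log 6 - Real.log 17 := by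
  have h17 : (17 : K) ≠ 0 := by norm_num
  have hu : ∑ i, P.w i * Real.log (P.v i 17) = 0 :=
    P.sum_log_eq_zero (a := Units.mk0 17 h17)
      ⟨show (17 : K) ∈ P.O from ofNat_mem P.O 17, P.inv_seventeen_mem⟩
  have e : ∀ i, P.w i * Real.log (if i ∈ P.arch then 6 else P.v i 17) =
      P.w i * Real.log (P.v i 17) +
        P.w i * Real.log (if i ∈ P.arch then 6 / 17 else 1) := by
    intro i
    split_ifs with h
    · rw [P.arch_seventeen i h, ← mul_add, ← Real.log_mul (by norm_num) (by norm_num)]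
      norm_num
    · simp
  simp only [e, Finset.sum_add_distrib, hu, P.sum_arch_log, zero_add]
  rw [Real.log_div (by norm_num) (by norm_num)]

/-- Three points of a line have small height only if their seventeenth powers are collinear. -/
theorem log_le_of_det_ne_zero [CharZero K] {a b : K} (ha : a ≠ 0) {t s : Kˣ × Kˣ}
    (ht : t ∈ P.unitPairs) (hs : s ∈ P.unitPairs) (hab : a + b = 1)
    (ht1 : a * t.1 + b * t.2 = 1) (hs1 : a * s.1 + b * s.2 = 1)
    (hD0 : (t.2 : K) ^ 17 - s.2 ^ 17 - t.1 ^ 17 + s.1 ^ 17 + t.1 ^ 17 * s.2 ^ 17 -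
      t.2 ^ 17 * s.1 ^ 17 ≠ 0) :
    Real.log 17 - Real.log 6 ≤ 17 * (P.height t + P.height s) := by
  classical
  set D : K := (t.2 : K) ^ 17 - s.2 ^ 17 - t.1 ^ 17 + s.1 ^ 17 + t.1 ^ 17 * s.2 ^ 17 -
      t.2 ^ 17 * s.1 ^ 17 with hDdef
  have mt1 := P.coe_fst_mem ht
  have mt2 := P.coe_snd_mem ht
  have ms1 := P.coe_fst_mem hs
  have ms2 := P.coe_snd_mem hs
  have hD : D ∈ P.O := sub_mem (add_mem (add_mem (sub_mem (sub_mem (pow_mem mt2 _) (pow_mem ms2 _))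
    (pow_mem mt1 _)) (pow_mem ms1 _)) (mul_mem (pow_mem mt1 _) (pow_mem ms2 _)))
    (mul_mem (pow_mem mt2 _) (pow_mem ms1 _))
  let f : Fin 6 → K := ![t.2, -s.2, -t.1, s.1, t.1 * s.2, -(t.2 * s.1)]
  have hodd : Odd 17 := by decide
  have hfsum : ∑ k, f k = 0 := by
    refine (mul_eq_zero_iff_left ha).1 ?_
    simp only [Fin.sum_univ_six, f, Matrix.cons_val]
    linear_combination (s.2 - 1 : K) * ht1 + (1 - t.2 : K) * hs1 + (t.2 - s.2 : K) * hab
  have hfD : ∑ k, f k ^ 17 = D := by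
    simp only [Fin.sum_univ_six, f, Matrix.cons_val, hodd.neg_pow, mul_pow, hDdef]
    ring
  have hf : ∀ i k, P.v i (f k) ≤ P.localHeight i t * P.localHeight i s := by
    intro i k
    have T0 := P.one_le_localHeight i t
    have S0 := P.one_le_localHeight i s
    have T1 := P.fst_le_localHeight i t
    have S1 := P.fst_le_localHeight i s
    have T2 := P.snd_le_localHeight i t
    have S2 := P.snd_le_localHeight i s
    have hT : ∀ z, P.v i z ≤ P.localHeight i t → P.v i z ≤ P.localHeight i t * P.localHeight i s :=
      fun z hz => hz.trans (le_mul_of_one_le_right (by positivity) S0)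
    have hS : ∀ z, P.v i z ≤ P.localHeight i s → P.v i z ≤ P.localHeight i t * P.localHeight i s :=
      fun z hz => hz.trans (le_mul_of_one_le_left (by positivity) T0)
    have hTS : ∀ z w, P.v i z ≤ P.localHeight i t → P.v i w ≤ P.localHeight i s →
        P.v i (z * w) ≤ P.localHeight i t * P.localHeight i s := by
      intro z w hz hw
      rw [map_mul]
      exact mul_le_mul hz hw ((P.v i).nonneg _) (by positivity)
    fin_cases k
    · exact hT _ T2
    · exact ((P.v i).map_neg _).trans_le (hS _ S2)
    · exact ((P.v i).map_neg _).trans_le (hT _ T1)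
    · exact hS _ S1
    · exact hTS _ _ T1 S2
    · exact ((P.v i).map_neg _).trans_le (hTS _ _ T2 S1)
  have key := P.sum_log_le hD hD0 (F := fun _ => 1)
    (G := fun i => (if i ∈ P.arch then 6 else P.v i 17) *
      (P.localHeight i t * P.localHeight i s) ^ 17) (fun _ => one_pos) fun i => by
    have hpos := mul_pos (P.localHeight_pos i t) (P.localHeight_pos i s)
    rw [one_mul]
    split_ifs with hi
    · rw [← hfD]
      refine ((P.v i).sum_le _ _).trans ((Finset.sum_le_card_nsmul _ _ _ fun k _ => ?_).trans
        (b := (6 : ℕ) • (P.localHeight i t * P.localHeight i s) ^ 17) ?_)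
      · rw [map_pow]
        exact pow_le_pow_left₀ ((P.v i).nonneg _) (hf i k) 17
      · simp
    · have h := (P.nonarch i hi).sum_pow_prime_sub_le (p := 17) (by norm_num) (s := Finset.univ)
        hpos.le (fun k _ => hf i k)
      rw [hfsum, hfD, zero_pow (by norm_num), zero_sub, (P.v i).map_neg] at h
      exact_mod_cast h
  have h17 : ∀ i, (if i ∈ P.arch then 6 else P.v i 17) ≠ 0 := by
    intro i
    split_ifs
    · norm_num
    · exact (P.v i).ne_zero (by norm_num)
  have e : ∀ i, P.w i * Real.log ((if i ∈ P.arch then 6 else P.v i 17) *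
      (P.localHeight i t * P.localHeight i s) ^ 17) =
      P.w i * Real.log (if i ∈ P.arch then 6 else P.v i 17) +
        (17 * (P.w i * Real.log (P.localHeight i t)) +
          17 * (P.w i * Real.log (P.localHeight i s))) := by
    intro i
    have hT := P.localHeight_pos i t
    have hS := P.localHeight_pos i s
    rw [Real.log_mul (h17 i) (by positivity), Real.log_pow, Real.log_mul hT.ne' hS.ne']
    push_cast
    ring
  simp only [e, Real.log_one, mul_zero, Finset.sum_const_zero, Finset.sum_add_distrib,
    P.sum_log_ite_seventeen, ← Finset.mul_sum] at key
  simp only [height]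
  linarith

/-- The logarithmic embedding of pairs of units; the sup norm on triples `(a, b, a - b)` is a
hexagonal norm. -/
noncomputable def logHom : Kˣ × Kˣ →* Multiplicative (PiLp 1 fun _ : ι => Fin 3 → ℝ) :=
  MonoidHom.mk' (fun u => Multiplicative.ofAdd (WithLp.toLp 1 fun i => P.w i •
    ![Real.log (P.v i u.1), Real.log (P.v i u.2),
      Real.log (P.v i u.1) - Real.log (P.v i u.2)])) fun u w => by
    have hne : ∀ i (z : Kˣ), P.v i z ≠ 0 := fun i z => (P.v i).ne_zero z.ne_zero
    rw [← ofAdd_add]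
    congr 1
    ext i k
    simp only [Prod.fst_mul, Prod.snd_mul, Units.val_mul, map_mul,
      Real.log_mul (hne _ _) (hne _ _), PiLp.add_apply, Pi.add_apply, Pi.smul_apply, smul_eq_mul]
    fin_cases k <;> simp <;> ring

/-- The norm of the logarithmic embedding. -/
noncomputable def size (u : Kˣ × Kˣ) : ℝ := ‖(P.logHom u).toAdd‖

theorem size_eq (u : Kˣ × Kˣ) : P.size u = ∑ i, P.w i *
    ‖(![Real.log (P.v i u.1), Real.log (P.v i u.2),
      Real.log (P.v i u.1) - Real.log (P.v i u.2)] : Fin 3 → ℝ)‖ := by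
  rw [size, PiLp.norm_eq_of_L1]
  refine Finset.sum_congr rfl fun i _ => ?_
  simp only [logHom, MonoidHom.mk'_apply, toAdd_ofAdd]
  rw [norm_smul, Real.norm_of_nonneg (P.w_nonneg i)]

theorem size_le {u : Kˣ × Kˣ} (hu : u ∈ P.unitPairs) : P.size u ≤ 3 * P.height u := by
  have h1 := P.sum_log_eq_zero hu.1
  have h2 := P.sum_log_eq_zero hu.2
  have : P.size u ≤ 3 * P.height u - (∑ i, P.w i * Real.log (P.v i u.1)) -
      ∑ i, P.w i * Real.log (P.v i u.2) := by
    rw [P.size_eq, height, Finset.mul_sum, ← Finset.sum_sub_distrib, ← Finset.sum_sub_distrib]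
    refine Finset.sum_le_sum fun i _ => ?_
    rw [P.log_localHeight]
    set α := Real.log (P.v i u.1)
    set β := Real.log (P.v i u.2)
    have m0 := le_max_left 0 (max α β)
    have m1 := (le_max_left α β).trans (le_max_right 0 _)
    have m2 := (le_max_right α β).trans (le_max_right 0 _)
    have : ‖(![α, β, α - β] : Fin 3 → ℝ)‖ ≤ 3 * max 0 (max α β) - α - β := by
      rw [pi_norm_le_iff_of_nonneg (by linarith)]
      intro k
      rw [Real.norm_eq_abs, abs_le]
      fin_cases k <;> simp only [Fin.reduceFinMk, Fin.zero_eta, Fin.mk_one, Matrix.cons_val] <;>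
        constructor <;> linarith
    calc P.w i * _ ≤ P.w i * (3 * max 0 (max α β) - α - β) :=
          mul_le_mul_of_nonneg_left this (P.w_nonneg i)
      _ = _ := by ring
  rw [h1, h2] at this
  linarith

theorem height_le {u : Kˣ × Kˣ} (hu : u ∈ P.unitPairs) : P.height u ≤ 2 / 3 * P.size u := by
  have h1 := P.sum_log_eq_zero hu.1
  have h2 := P.sum_log_eq_zero hu.2
  have : 3 * P.height u ≤ 2 * P.size u + (∑ i, P.w i * Real.log (P.v i u.1)) +
      ∑ i, P.w i * Real.log (P.v i u.2) := by
    rw [P.size_eq, height, Finset.mul_sum, Finset.mul_sum, ← Finset.sum_add_distrib,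
      ← Finset.sum_add_distrib]
    refine Finset.sum_le_sum fun i _ => ?_
    rw [P.log_localHeight]
    set α := Real.log (P.v i u.1)
    set β := Real.log (P.v i u.2)
    set N := ‖(![α, β, α - β] : Fin 3 → ℝ)‖ with hN
    have n0 : |α| ≤ N := norm_le_pi_norm (![α, β, α - β] : Fin 3 → ℝ) 0
    have n1 : |β| ≤ N := norm_le_pi_norm (![α, β, α - β] : Fin 3 → ℝ) 1
    have n2 : |α - β| ≤ N := norm_le_pi_norm (![α, β, α - β] : Fin 3 → ℝ) 2
    rw [abs_le] at n0 n1 n2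
    have : 3 * max 0 (max α β) ≤ 2 * N + α + β := by
      rcases max_choice 0 (max α β) with h | h
      · rw [h]; linarith
      · rw [h]
        rcases max_choice α β with h | h <;> rw [h] <;> linarith
    calc 3 * (P.w i * max 0 (max α β)) = P.w i * (3 * max 0 (max α β)) := by ring
      _ ≤ P.w i * (2 * N + α + β) := mul_le_mul_of_nonneg_left this (P.w_nonneg i)
      _ = _ := by ring
  rw [h1, h2] at this
  linarith

theorem norm_sub_eq_size (u w : Kˣ × Kˣ) :
    ‖(P.logHom u).toAdd - (P.logHom w).toAdd‖ = P.size (u / w) := by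
  rw [size, map_div, toAdd_div]

theorem card_le_of_size_lt [CharZero K] {x : Kˣ × Kˣ} (hx : x ∈ P.unitPairs)
    (hx1 : (x.1 : K) + x.2 = 1) (B : Finset (Kˣ × Kˣ)) (hB : ∀ y ∈ B, y ∈ P.unitPairs)
    (hB1 : ∀ y ∈ B, (y.1 : K) + y.2 = 1) (hsize : ∀ y ∈ B, P.size (y / x) < 9 / 200) :
    B.card ≤ 17 := by
  classical
  have hx10 := x.1.ne_zero
  have hx20 := x.2.ne_zero
  have hlog : 1.02 ≤ Real.log 17 - Real.log 6 := by
    rw [← Real.log_div (by norm_num) (by norm_num), Real.le_log_iff_exp_le (by norm_num)]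
    have h1 := Real.exp_one_lt_d9
    have h2 := Real.add_one_le_exp (-0.02)
    have h3 : Real.exp 1.02 * Real.exp (-0.02) = Real.exp 1 := by
      rw [← Real.exp_add]; norm_num
    have h4 := Real.exp_pos 1.02
    nlinarith
  have hdet : ∀ y ∈ B, ∀ z ∈ B, ((y / x).2 : K) ^ 17 - (z / x).2 ^ 17 - (y / x).1 ^ 17 +
      (z / x).1 ^ 17 + (y / x).1 ^ 17 * (z / x).2 ^ 17 - (y / x).2 ^ 17 * (z / x).1 ^ 17 = 0 := by
    intro y hy z hz
    by_contra h
    have hym := div_mem (hB y hy) hx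
    have hzm := div_mem (hB z hz) hx
    have hline : ∀ u ∈ B, (x.1 : K) * (u / x).1 + x.2 * (u / x).2 = 1 := by
      intro u hu
      rw [Prod.fst_div, Prod.snd_div, Units.val_div_eq_div_val, Units.val_div_eq_div_val,
        mul_div_cancel₀ _ hx10, mul_div_cancel₀ _ hx20, hB1 u hu]
    have h1 := P.log_le_of_det_ne_zero hx10 hym hzm hx1 (hline y hy) (hline z hz) h
    have h2 := P.height_le hym
    have h3 := P.height_le hzm
    have h4 := hsize y hy
    have h5 := hsize z hz
    norm_num at hlog
    linarith
  have hinj : Set.InjOn (fun y : Kˣ × Kˣ => (y.1 : K)) B := by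
    intro y hy z hz h
    have h' : (y.1 : K) = z.1 := h
    refine Prod.ext (Units.ext h') (Units.ext ?_)
    linear_combination hB1 y hy - hB1 z hz - h'
  have hroots : ∀ Q : Polynomial K, Q ≠ 0 → Q.natDegree ≤ 17 →
      (∀ y ∈ B, Q.eval (y.1 : K) = 0) → B.card ≤ 17 := by
    intro Q hQ hdeg hev
    rw [← Finset.card_image_of_injOn hinj]
    refine (Finset.card_le_card (t := Q.roots.toFinset) fun z hz => ?_).trans
      ((Multiset.toFinset_card_le _).trans ((Polynomial.card_roots' Q).trans hdeg))
    obtain ⟨y, hy, rfl⟩ := Finset.mem_image.1 hz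
    simpa [hQ] using hev y hy
  by_cases hall : ∀ y ∈ B, (y.1 : K) ^ 17 = x.1 ^ 17
  · refine hroots (Polynomial.X ^ 17 - Polynomial.C ((x.1 : K) ^ 17))
      (Polynomial.X_pow_sub_C_ne_zero (by norm_num) _)
      (Polynomial.natDegree_X_pow_sub_C (R := K)).le fun y hy => ?_
    simp [hall y hy]
  push Not at hall
  obtain ⟨y, hy, hne⟩ := hall
  set τ₁ : K := (y / x).1 ^ 17 with hτ₁
  set τ₂ : K := (y / x).2 ^ 17 with hτ₂
  have hτ : τ₁ - 1 ≠ 0 := by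
    intro h
    rw [sub_eq_zero, hτ₁, Prod.fst_div, Units.val_div_eq_div_val, div_pow,
      div_eq_one_iff_eq (pow_ne_zero _ hx10)] at h
    exact hne h
  let Q : Polynomial K :=
    Polynomial.C ((τ₁ - 1) / x.2 ^ 17) * (1 - Polynomial.X) ^ 17 +
      Polynomial.C ((1 - τ₂) / x.1 ^ 17) * Polynomial.X ^ 17 + Polynomial.C (τ₂ - τ₁)
  refine hroots Q ?_ ?_ fun z hz => ?_
  · intro hQ
    have h := congrArg (fun q => (Polynomial.derivative q).eval 0) hQ
    simp [Q, hτ, hx20, Polynomial.derivative_pow] at h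
  · simp only [Q]
    compute_degree
  · have h := hdet y hy z hz
    have h2 : (z.2 : K) = 1 - z.1 := by linear_combination hB1 z hz
    simp only [Q, Polynomial.eval_add, Polynomial.eval_mul, Polynomial.eval_C, Polynomial.eval_pow,
      Polynomial.eval_sub, Polynomial.eval_one, Polynomial.eval_X]
    rw [← h2, ← h]
    simp only [Prod.fst_div, Prod.snd_div, Units.val_div_eq_div_val, div_pow, hτ₁, hτ₂]
    ring

/-- The counting theorem for solutions of the unit equation in a place system. -/
theorem card_le [CharZero K] (S : Finset (Kˣ × Kˣ)) (hS : ∀ y ∈ S, y ∈ P.unitPairs)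
    (hS1 : ∀ y ∈ S, (y.1 : K) + y.2 = 1)
    (W : Submodule ℝ (PiLp 1 fun _ : ι => Fin 3 → ℝ)) (hW : ∀ y ∈ S, (P.logHom y).toAdd ∈ W) :
    S.card ≤ 2 ^ (8 * (Module.finrank ℝ W + 1)) := by
  classical
  let f : Kˣ × Kˣ → W := fun y => if h : y ∈ S then ⟨(P.logHom y).toAdd, hW y h⟩ else 0
  have hf : ∀ y ∈ S, ((f y : W) : PiLp 1 fun _ : ι => Fin 3 → ℝ) = (P.logHom y).toAdd := by
    intro y hy; simp [f, hy]
  refine Finset.card_le_of_gap_principles S f ?_ ?_ ?_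
  · intro x hx y hy hxy
    rw [← Submodule.norm_coe, ← Submodule.norm_coe, Submodule.coe_sub, hf x hx, hf y hy,
      P.norm_sub_eq_size]
    have h1 := P.height_le_of_ne (hS x hx) (hS y hy) (hS1 x hx) (hS1 y hy) hxy
    have h2 := P.size_le (hS x hx)
    have h3 := P.height_le (div_mem (hS y hy) (hS x hx))
    change P.size x ≤ _
    linarith
  · intro x hx y hy n hn
    rw [← Submodule.norm_coe, ← Submodule.norm_coe (f y - _), Submodule.coe_sub,
      Submodule.coe_smul, hf x hx, hf y hy]
    have e : (P.logHom y).toAdd - (2 * n : ℝ) • (P.logHom x).toAdd =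
        (P.logHom (y / x ^ (2 * n))).toAdd := by
      rw [map_div, map_pow, toAdd_div, toAdd_pow, ← Nat.cast_smul_eq_nsmul ℝ]
      push_cast
      rfl
    rw [e]
    have h1 := P.mul_height_le (hS x hx) (hS y hy) (hS1 x hx) (hS1 y hy) hn
    have h2 := P.size_le (hS x hx)
    have h3 := P.height_le (div_mem (hS y hy) (pow_mem (hS x hx) (2 * n)))
    have hlog : Real.log (2 * 16 ^ n) ≤ n * Real.log 32 := by
      rw [← Real.log_pow]
      refine Real.log_le_log (by positivity) ?_
      calc (2 : ℝ) * 16 ^ n ≤ 2 ^ n * 16 ^ n := by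
            gcongr; exact le_self_pow₀ one_le_two hn.ne'
        _ = 32 ^ n := by rw [← mul_pow]; norm_num
    change n * P.size x ≤ 2 * P.size _ + _
    have h4 : (n : ℝ) * P.size x ≤ n * (3 * P.height x) := by gcongr
    linarith
  · intro x hx
    refine P.card_le_of_size_lt (hS x hx) (hS1 x hx) _ (fun y hy => hS y (Finset.mem_filter.1 hy).1)
      (fun y hy => hS1 y (Finset.mem_filter.1 hy).1) fun y hy => ?_
    obtain ⟨hy, h⟩ := Finset.mem_filter.1 hy
    rw [← P.norm_sub_eq_size, ← hf x hx, ← hf y hy, ← Submodule.coe_sub, Submodule.norm_coe]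
    exact h

end PlaceSystem

namespace NumberField

variable {K : Type*} [Field K] [NumberField K]

/-- The elements of a number field that are integral outside a finite set of places. -/
def integersOutside (S : Finset (FinitePlace K)) : Subring K where
  carrier := {z | ∀ w ∉ S, w z ≤ 1}
  mul_mem' {a b} ha hb w hw := by
    rw [map_mul]
    exact mul_le_one₀ (ha w hw) (apply_nonneg w b) (hb w hw)
  one_mem' w _ := (map_one w).le
  add_mem' {a b} ha hb w hw := (FinitePlace.add_le w a b).trans (max_le (ha w hw) (hb w hw))
  zero_mem' w _ := by rw [map_zero]; exact zero_le_one
  neg_mem' {a} ha w hw := by rw [map_neg_eq_map]; exact ha w hw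

theorem one_le_prod_of_mem_integersOutside {S : Finset (FinitePlace K)} {D : K}
    (hD : D ∈ integersOutside S) (hD0 : D ≠ 0) :
    1 ≤ (∏ v : InfinitePlace K, v D ^ v.mult) * ∏ w ∈ S, w D := by
  classical
  rw [← prod_abs_eq_one hD0]
  have hfin := FinitePlace.hasFiniteMulSupport hD0
  rw [finprod_eq_prod_of_mulSupport_subset (s := S ∪ hfin.toFinset) _
    fun w hw => Finset.mem_coe.2 (Finset.mem_union_right _ (hfin.mem_toFinset.2 hw))]
  refine mul_le_mul_of_nonneg_left ?_
    (Finset.prod_nonneg fun v _ => pow_nonneg (apply_nonneg v D) _)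
  rw [← Finset.prod_sdiff (Finset.subset_union_left (s₁ := S) (s₂ := hfin.toFinset))]
  refine mul_le_of_le_one_left (Finset.prod_nonneg fun w _ => apply_nonneg w D) ?_
  refine Finset.prod_le_one (fun w _ => apply_nonneg w D) fun w hw => ?_
  exact hD w (Finset.mem_sdiff.1 hw).2

variable (K) in
theorem sum_mult_pos : (0 : ℝ) < ∑ v : InfinitePlace K, (v.mult : ℝ) := by
  have h := InfinitePlace.sum_mult_eq (K := K)
  rw [← Nat.cast_sum, h]
  exact_mod_cast Module.finrank_pos

/-- The place system of a number field attached to a finite set of finite places that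
contains the places above `17`. -/
noncomputable def placeSystem (S : Finset (FinitePlace K)) (hS : ∀ w ∉ S, w (17 : K) = 1) :
    PlaceSystem K (InfinitePlace K ⊕ S) where
  v := Sum.elim (fun v => v.1) (fun w => w.1.1)
  w := Sum.elim (fun v => v.mult / ∑ v : InfinitePlace K, (v.mult : ℝ))
    (fun _ => 1 / ∑ v : InfinitePlace K, (v.mult : ℝ))
  arch := Finset.univ.disjSum ∅
  O := integersOutside S
  w_nonneg := by
    have := sum_mult_pos K
    rintro (v | w) <;> simp only [Sum.elim_inl, Sum.elim_inr] <;> positivity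
  sum_arch := by
    rw [Finset.sum_disjSum, Finset.sum_empty, add_zero]
    simp only [Sum.elim_inl]
    rw [← Finset.sum_div, div_self (sum_mult_pos K).ne']
  nonarch := by
    rintro (v | w) h
    · simp at h
    · exact FinitePlace.add_le w.1
  sum_log_nonneg D hD hD0 := by
    have h := Real.log_nonneg (one_le_prod_of_mem_integersOutside hD hD0)
    have h1 : ∀ v : InfinitePlace K, v D ≠ 0 := fun v => by simpa using hD0
    have h2 : ∀ w : FinitePlace K, w D ≠ 0 := fun w => (FinitePlace.pos_iff.2 hD0).ne'
    rw [Real.log_mul (Finset.prod_ne_zero_iff.2 fun v _ => pow_ne_zero _ (h1 v))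
      (Finset.prod_ne_zero_iff.2 fun w _ => h2 w),
      Real.log_prod fun v _ => pow_ne_zero _ (h1 v), Real.log_prod fun w _ => h2 w] at h
    simp only [Real.log_pow] at h
    rw [Fintype.sum_sum_type]
    simp only [Sum.elim_inl, Sum.elim_inr]
    have h3 := div_nonneg h (sum_mult_pos K).le
    rw [add_div, Finset.sum_div, Finset.sum_div, ← Finset.sum_coe_sort S] at h3
    convert h3 using 3
    · rfl
    · exact div_mul_eq_mul_div _ _ _
    · exact one_div_mul_eq_div _ _
  arch_seventeen := by
    rintro (v | w) h
    · change v (17 : K) = 17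
      rw [← InfinitePlace.norm_embedding_eq, map_ofNat]
      simp
    · simp at h
  inv_seventeen_mem w hw := by rw [map_inv₀, hS w hw, inv_one]

/-- The counting theorem for solutions of the unit equation in a number field. -/
theorem card_unit_equation_le {r : ℕ} (g : Fin r → Kˣ × Kˣ) (s : Finset (Kˣ × Kˣ))
    (hs : ∀ y ∈ s, (y.1 : K) + y.2 = 1)
    (hg : ∀ y ∈ s, ∃ m : ℕ, 0 < m ∧ y ^ m ∈ Subgroup.closure (Set.range g)) :
    s.card ≤ 2 ^ (8 * (r + 1)) := by
  classical
  have hfin : ∀ z : K, z ≠ 0 → {w : FinitePlace K | w z ≠ 1}.Finite := fun z hz =>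
    FinitePlace.hasFiniteMulSupport hz
  have h17 : (17 : K) ≠ 0 := by norm_num
  have hbad : ({w : FinitePlace K | w (17 : K) ≠ 1} ∪ ⋃ y ∈ s,
      ({w : FinitePlace K | w (y.1 : K) ≠ 1} ∪ {w : FinitePlace K | w (y.2 : K) ≠ 1})).Finite :=
    (hfin 17 h17).union (s.finite_toSet.biUnion fun y _ =>
      (hfin _ y.1.ne_zero).union (hfin _ y.2.ne_zero))
  set S := hbad.toFinset with hSdef
  have hS : ∀ w : FinitePlace K, w ∉ S → w (17 : K) = 1 ∧
      ∀ y ∈ s, w (y.1 : K) = 1 ∧ w (y.2 : K) = 1 := by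
    intro w hw
    rw [hSdef, Set.Finite.mem_toFinset] at hw
    simp only [Set.mem_union, Set.mem_iUnion, Set.mem_ofPred_eq, not_or, not_exists,
      not_not] at hw
    exact hw
  let P := placeSystem S fun w hw => (hS w hw).1
  let b : Fin r → PiLp 1 fun _ : InfinitePlace K ⊕ S => Fin 3 → ℝ :=
    fun i => (P.logHom (g i)).toAdd
  let W : Submodule ℝ (PiLp 1 fun _ : InfinitePlace K ⊕ S => Fin 3 → ℝ) :=
    Submodule.span ℝ (Set.range b)
  have hW : ∀ y ∈ s, (P.logHom y).toAdd ∈ W := by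
    intro y hy
    obtain ⟨m, hm, hym⟩ := hg y hy
    have hle : Subgroup.closure (Set.range g) ≤
        (AddSubgroup.toSubgroup W.toAddSubgroup).comap P.logHom := by
      rw [Subgroup.closure_le]
      rintro _ ⟨i, rfl⟩
      exact Submodule.subset_span (Set.mem_range_self (f := b) i)
    have h : (P.logHom (y ^ m)).toAdd ∈ W := hle hym
    rw [map_pow, toAdd_pow, ← Nat.cast_smul_eq_nsmul ℝ] at h
    exact (W.smul_mem_iff (by exact_mod_cast hm.ne')).1 h
  have hunit : ∀ y ∈ s, y ∈ P.unitPairs := by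
    intro y hy
    have key : ∀ z : Kˣ, (∀ w ∉ S, w (z : K) = 1) → z ∈ P.O.toSubmonoid.units := by
      intro z hz
      refine ⟨fun w hw => (hz w hw).le, fun w hw => ?_⟩
      change w ((z⁻¹ : Kˣ) : K) ≤ 1
      rw [Units.val_inv_eq_inv_val, map_inv₀, hz w hw, inv_one]
    exact ⟨key _ fun w hw => ((hS w hw).2 y hy).1, key _ fun w hw => ((hS w hw).2 y hy).2⟩
  refine (P.card_le s hunit hs W hW).trans ?_
  have hrank : Module.finrank ℝ W ≤ r := 
    (finrank_range_le_card (R := ℝ) b).trans_eq (Fintype.card_fin r)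
  gcongr
  norm_num

end NumberField

/-- Specialization: finitely many complex numbers and their inverses lie in a ring which has a
homomorphism to a number field. -/
theorem exists_subalgebra_ringHom_numberField (T : Finset ℂ) :
    ∃ (A : Subalgebra ℚ ℂ) (K : Type) (_ : Field K) (_ : NumberField K) (_ : A →+* K),
      ∀ t ∈ T, t ∈ A ∧ t⁻¹ ∈ A := by
  classical
  let A : Subalgebra ℚ ℂ := Algebra.adjoin ℚ ((T ∪ T.image (·⁻¹) : Finset ℂ) : Set ℂ)
  have hA : Algebra.FiniteType ℚ A :=
    (Subalgebra.fg_iff_finiteType A).1 (Subalgebra.fg_adjoin_finset _)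
  obtain ⟨m, hm⟩ := Ideal.exists_maximal A
  let _ : Field (A ⧸ m) := Ideal.Quotient.field m
  have hft : Algebra.FiniteType ℚ (A ⧸ m) :=
    hA.of_surjective (Ideal.Quotient.mkₐ ℚ m) (Ideal.Quotient.mkₐ_surjective ℚ m)
  have hfin : Module.Finite ℚ (A ⧸ m) := finite_of_finite_type_of_isJacobsonRing ℚ (A ⧸ m)
  have hchar : CharZero (A ⧸ m) := charZero_of_injective_algebraMap
    (algebraMap ℚ (A ⧸ m)).injective
  have hnf : NumberField (A ⧸ m) :=
    { to_charZero := hchar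
      to_finiteDimensional := by
        convert hfin
        exact Subsingleton.elim _ _ }
  refine ⟨A, A ⧸ m, inferInstance, hnf, Ideal.Quotient.mk m, fun t ht => ⟨?_, ?_⟩⟩
  · exact Algebra.subset_adjoin (by simp [ht])
  · exact Algebra.subset_adjoin (by simp [ht])

theorem Subgroup.closure_range_eq_of_mulEquiv {G : Type*} [CommGroup G] {H : Subgroup G} {r : ℕ}
    (e : H ≃* Multiplicative (Fin r → ℤ)) :
    Subgroup.closure (Set.range fun i =>
      (e.symm (Multiplicative.ofAdd (Pi.single i 1)) : G)) = H := by
  refine le_antisymm ((Subgroup.closure_le _).2 ?_) fun x hx => ?_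
  · rintro _ ⟨i, rfl⟩
    exact SetLike.coe_mem _
  · have hk : ∀ k : Fin r → ℤ, ((e.symm (Multiplicative.ofAdd k) : H) : G) ∈ Subgroup.closure
        (Set.range fun i => (e.symm (Multiplicative.ofAdd (Pi.single i 1)) : G)) := by
      intro k
      have hk : Multiplicative.ofAdd k = ∏ i, Multiplicative.ofAdd (Pi.single i (1 : ℤ)) ^ k i := by
        apply Multiplicative.toAdd.injective
        rw [toAdd_prod]
        simp only [toAdd_ofAdd, toAdd_zpow]
        ext j
        simp [Finset.sum_apply, Pi.single_apply]
      rw [hk, map_prod, ← H.subtype_apply, map_prod]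
      refine Subgroup.prod_mem _ fun i _ => ?_
      rw [map_zpow, map_zpow]
      exact Subgroup.zpow_mem _ (Subgroup.subset_closure (Set.mem_range_self i)) _
    simpa using hk (e ⟨x, hx⟩).toAdd

theorem card_complex_unit_equation_le {r : ℕ} (g : Fin r → ℂˣ × ℂˣ) (s : Finset (ℂˣ × ℂˣ))
    (hs : ∀ y ∈ s, (y.1 : ℂ) + y.2 = 1)
    (hg : ∀ y ∈ s, ∃ m : ℕ, 0 < m ∧ y ^ m ∈ Subgroup.closure (Set.range g)) :
    s.card ≤ 2 ^ (8 * (r + 1)) := by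
  classical
  let T : Finset ℂ := s.image (fun y => (y.1 : ℂ)) ∪ s.image (fun y => (y.2 : ℂ)) ∪
    (Finset.univ.image fun i => ((g i).1 : ℂ)) ∪ (Finset.univ.image fun i => ((g i).2 : ℂ)) ∪
    (s ×ˢ s).image fun p => (p.1.1 : ℂ) - p.2.1
  obtain ⟨A, K, _, _, φ, hT⟩ := exists_subalgebra_ringHom_numberField T
  let U : Subgroup ℂˣ := A.toSubmonoid.units
  let ψ : U →* Kˣ := (Units.map (φ : A →* K)).comp
    (A.toSubmonoid.unitsEquivUnitsType : U →* A.toSubmonoidˣ)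
  let V : Subgroup (ℂˣ × ℂˣ) := U.prod U
  have hψ : ∀ u : U, (ψ u : K) = φ ⟨((u : ℂˣ) : ℂ), u.2.1⟩ := fun u => rfl
  let Ψ : V →* Kˣ × Kˣ :=
    (ψ.comp (((MonoidHom.fst ℂˣ ℂˣ).comp V.subtype).codRestrict U fun y => y.2.1)).prod
      (ψ.comp (((MonoidHom.snd ℂˣ ℂˣ).comp V.subtype).codRestrict U fun y => y.2.2))
  have hU : ∀ u : ℂˣ, (u : ℂ) ∈ T → u ∈ U := fun u hu =>
    ⟨(hT _ hu).1, by
      change ((u⁻¹ : ℂˣ) : ℂ) ∈ A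
      rw [Units.val_inv_eq_inv_val]
      exact (hT _ hu).2⟩
  have hsV : ∀ y ∈ s, y ∈ V := fun y hy =>
    ⟨hU _ (by simp only [T, Finset.mem_union, Finset.mem_image]; grind),
      hU _ (by simp only [T, Finset.mem_union, Finset.mem_image]; grind)⟩
  have hgV : ∀ i, g i ∈ V := fun i =>
    ⟨hU _ (by simp only [T, Finset.mem_union, Finset.mem_image]; grind),
      hU _ (by simp only [T, Finset.mem_union, Finset.mem_image]; grind)⟩
  have hd : ∀ d : A, (d : ℂ) ∈ T → (d : ℂ) ≠ 0 → φ d ≠ 0 := by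
    intro d hd hd0 h
    have h1 : d * ⟨(d : ℂ)⁻¹, (hT _ hd).2⟩ = 1 := Subtype.ext (mul_inv_cancel₀ hd0)
    have h2 := congrArg φ h1
    rw [map_mul, h, zero_mul, map_one] at h2
    exact zero_ne_one h2
  let f : s → Kˣ × Kˣ := fun y => Ψ ⟨y.1, hsV y.1 y.2⟩
  have hf1 : ∀ y : s, ((f y).1 : K) = φ ⟨((y : ℂˣ × ℂˣ).1 : ℂ), (hsV y.1 y.2).1.1⟩ := fun y => rfl
  have hf2 : ∀ y : s, ((f y).2 : K) = φ ⟨((y : ℂˣ × ℂˣ).2 : ℂ), (hsV y.1 y.2).2.1⟩ := fun y => rfl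
  have hinj : Function.Injective f := by
    intro y z hyz
    by_contra hne
    have h1 : ((y : ℂˣ × ℂˣ).1 : ℂ) - ((z : ℂˣ × ℂˣ).1 : ℂ) ≠ 0 := by
      intro h
      have h1 := sub_eq_zero.1 h
      refine hne (Subtype.ext (Prod.ext (Units.ext h1) (Units.ext ?_)))
      have hy := hs y.1 y.2
      have hz := hs z.1 z.2
      rw [← h1, ← hy] at hz
      exact (add_left_cancel hz).symm
    refine hd (⟨((y : ℂˣ × ℂˣ).1 : ℂ), (hsV y.1 y.2).1.1⟩ -
      ⟨((z : ℂˣ × ℂˣ).1 : ℂ), (hsV z.1 z.2).1.1⟩) ?_ h1 ?_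
    · exact Finset.mem_union_right _ (Finset.mem_image.2
        ⟨(y.1, z.1), Finset.mem_product.2 ⟨y.2, z.2⟩, rfl⟩)
    · rw [map_sub, ← hf1, ← hf1, hyz, sub_self]
  have hcard : (Finset.univ.image f).card = s.card := by
    rw [Finset.card_image_of_injective _ hinj, Finset.card_univ, Fintype.card_coe]
  rw [← hcard]
  refine NumberField.card_unit_equation_le (fun i => Ψ ⟨g i, hgV i⟩) _ ?_ ?_
  · intro y hy
    obtain ⟨y, -, rfl⟩ := Finset.mem_image.1 hy
    rw [hf1, hf2, ← map_add, ← map_one φ]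
    exact congrArg φ (Subtype.ext (hs y.1 y.2))
  · intro y hy
    obtain ⟨y, -, rfl⟩ := Finset.mem_image.1 hy
    obtain ⟨m, hm, hym⟩ := hg y.1 y.2
    refine ⟨m, hm, ?_⟩
    have h1 : Subgroup.closure (Set.range g) =
        (Subgroup.closure (Set.range fun i => (⟨g i, hgV i⟩ : V))).map V.subtype := by
      rw [MonoidHom.map_closure, ← Set.range_comp]
      rfl
    rw [h1] at hym
    obtain ⟨z, hz, hzy⟩ := hym
    have h2 : z = ⟨y.1, hsV y.1 y.2⟩ ^ m := Subtype.ext hzy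
    have h3 := Subgroup.mem_map_of_mem Ψ hz
    rw [MonoidHom.map_closure, ← Set.range_comp, h2, map_pow] at h3
    exact h3

/-- Theorem of Beukers and Schlickewei: if `Γ ≤ (ℂ*)²` has finite rank `r` (it contains a
free subgroup `Γ₀` of rank `r` such that every element of `Γ` has a positive power in `Γ₀`),
then the equation `x + y = 1` has finitely many solutions in `Γ`, at most `2^(8(r+1))`. -/
theorem beukers_schlickewei (Γ : Subgroup (ℂˣ × ℂˣ)) (r : ℕ)
    (Γ₀ : Subgroup (ℂˣ × ℂˣ)) (hle : Γ₀ ≤ Γ)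
    (hfree : Nonempty (Γ₀ ≃* Multiplicative (Fin r → ℤ)))
    (hpow : ∀ x ∈ Γ, ∃ m : ℕ, 0 < m ∧ x ^ m ∈ Γ₀) :
    ({p : ℂˣ × ℂˣ | p ∈ Γ} ∩ {p : ℂˣ × ℂˣ | (p.1 : ℂ) + (p.2 : ℂ) = 1}).Finite ∧
    ({p : ℂˣ × ℂˣ | p ∈ Γ} ∩ {p : ℂˣ × ℂˣ | (p.1 : ℂ) + (p.2 : ℂ) = 1}).ncard
      ≤ 2 ^ (8 * (r + 1)) := by
  obtain ⟨e⟩ := hfree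
  have hbound : ∀ s : Finset (ℂˣ × ℂˣ),
      (s : Set (ℂˣ × ℂˣ)) ⊆ {p | p ∈ Γ} ∩ {p | (p.1 : ℂ) + (p.2 : ℂ) = 1} →
      s.card ≤ 2 ^ (8 * (r + 1)) := by
    intro s hs
    refine card_complex_unit_equation_le
      (fun i => (e.symm (Multiplicative.ofAdd (Pi.single i 1)) : ℂˣ × ℂˣ)) s
      (fun y hy => (hs hy).2) fun y hy => ?_
    rw [Subgroup.closure_range_eq_of_mulEquiv e]
    exact hpow y (hs hy).1
  have hfin : ({p : ℂˣ × ℂˣ | p ∈ Γ} ∩ {p : ℂˣ × ℂˣ | (p.1 : ℂ) + (p.2 : ℂ) = 1}).Finite := by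
    by_contra hinf
    obtain ⟨s, hs, hcard⟩ :=
      Set.Infinite.exists_subset_card_eq hinf (2 ^ (8 * (r + 1)) + 1)
    have := hbound s hs
    lia
  refine ⟨hfin, ?_⟩
  rw [Set.ncard_eq_toFinset_card _ hfin]
  exact hbound _ (by rw [Set.Finite.coe_toFinset])
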